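/- arXiv:2010.09333 — 6 statements merged into one kernel-verified Lean document; each statement's English description precedes it below -/
import Mathlib

section
/- Let ℓ > 0 and let x¹, x² ∈ S. Let y¹ ∈ S be the unique maximizer over y ∈ S of min_{i=1,…,m}(F_i(x¹) − F_i(y) − (ℓ/2)‖x¹ − y‖²) and y² ∈ S the unique maximizer over y ∈ S of min_{i=1,…,m}(F_i(x²) − F_i(y) − (ℓ/2)‖x² − y‖²). Then ‖y¹ − y²‖ ≤ (1/2)‖x¹ − x²‖ + √( (1/4)‖x¹ − x²‖² + (2/ℓ) max_{i=1,…,m} |F_i(x¹) − F_i(x²)| ). -/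
/-!
Write `G x y = ⨅ i, (F i x - F i y)`, which is concave in `y`. Pulling the regularization out of the
infimum, `yₖ` maximizes `G xₖ y - ℓ / 2 * ‖xₖ - y‖ ^ 2`, that is, `yₖ` is a proximal point of
`-G xₖ` at `xₖ`. A strongly concave function falls off at least quadratically from its maximum;
adding this bound at `y₁`, tested against `y₂`, to the one at `y₂`, tested against `y₁`, gives
`ℓ * ‖y₁ - y₂‖ ^ 2 ≤ ℓ * ⟪x₁ - x₂, y₁ - y₂⟫ + (G x₁ y₁ - G x₂ y₁) + (G x₂ y₂ - G x₁ y₂)`.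
Each of the last two differences is at most `⨆ i, |F i x₁ - F i x₂|`, and solving the resulting
quadratic inequality for `‖y₁ - y₂‖` gives the estimate.
-/

open Filter Set Topology

theorem le_half_mul_add_sqrt_of_sq_le {b c d : ℝ} (h : d ^ 2 ≤ b * d + c) :
    d ≤ 1 / 2 * b + √(1 / 4 * b ^ 2 + c) := by
  have complete_square : (d - 1 / 2 * b) ^ 2 ≤ 1 / 4 * b ^ 2 + c := by linarith
  linarith [Real.le_sqrt_of_sq_le complete_square]

section Infimum

variable {ι : Type*}

theorem bddBelow_range_of_bddAbove_range_abs_sub {α : Type*} [Lattice α] [AddCommGroup α]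
    [IsOrderedAddMonoid α] {f g : ι → α} (hf : BddBelow (range f))
    (hfg : BddAbove (range fun i ↦ |f i - g i|)) : BddBelow (range g) := by
  obtain ⟨b, hb⟩ := hf
  obtain ⟨c, hc⟩ := hfg
  refine ⟨b - c, forall_mem_range.2 fun i ↦ ?_⟩
  calc b - c ≤ f i - (f i - g i) :=
        sub_le_sub (hb (mem_range_self i)) ((le_abs_self _).trans (hc (mem_range_self i)))
    _ = g i := sub_sub_cancel _ _

variable [Nonempty ι]

theorem concaveOn_ciInf {𝕜 E β : Type*} [Semiring 𝕜] [PartialOrder 𝕜] [AddCommMonoid E]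
    [SMul 𝕜 E] [ConditionallyCompleteLattice β] [AddCommMonoid β] [IsOrderedAddMonoid β]
    [Module 𝕜 β] [PosSMulMono 𝕜 β] {s : Set E} {f : ι → E → β}
    (hf : ∀ i, ConcaveOn 𝕜 s (f i)) (hbdd : ∀ y ∈ s, BddBelow (range fun i ↦ f i y)) :
    ConcaveOn 𝕜 s fun y ↦ ⨅ i, f i y := by
  refine ⟨(hf (Classical.arbitrary ι)).1, fun y hy z hz a b ha hb hab ↦ le_ciInf fun i ↦ ?_⟩
  calc a • (⨅ j, f j y) + b • ⨅ j, f j z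
      ≤ a • f i y + b • f i z := by
        gcongr
        exacts [ciInf_le (hbdd y hy) i, ciInf_le (hbdd z hz) i]
    _ ≤ f i (a • y + b • z) := (hf i).2 hy hz ha hb hab

variable {α : Type*} [ConditionallyCompleteLattice α] [AddCommGroup α] [IsOrderedAddMonoid α]

theorem ciInf_sub_ciInf_le {f g : ι → α} {c : α} (hf : BddBelow (range f))
    (h : ∀ i, f i - g i ≤ c) : (⨅ i, f i) - ⨅ i, g i ≤ c :=
  sub_le_comm.1 <| le_ciInf fun i ↦
    (sub_le_sub_right (ciInf_le hf i) c).trans (sub_le_comm.1 (h i))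

theorem isMaxOn_ciInf_sub_iff {X : Type*} {s : Set X} {f : ι → X → α} {c : X → α} {a : X}
    (ha : a ∈ s) (hbdd : ∀ y ∈ s, BddBelow (range fun i ↦ f i y)) :
    IsMaxOn (fun y ↦ ⨅ i, (f i y - c y)) s a ↔ IsMaxOn (fun y ↦ (⨅ i, f i y) - c y) s a := by
  simp only [isMaxOn_iff]
  refine forall₂_congr fun y hy ↦ ?_
  rw [ciInf_sub (hbdd y hy), ciInf_sub (hbdd a ha)]

end Infimum

theorem uniformConcaveOn_add_modulus_le_of_isMaxOn {E : Type*} [NormedAddCommGroup E]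
    [NormedSpace ℝ E] {s : Set E} {φ : ℝ → ℝ} {f : E → ℝ} {a b : E} (hf : UniformConcaveOn s φ f)
    (hmax : IsMaxOn f s a) (ha : a ∈ s) (hb : b ∈ s) : f b + φ ‖a - b‖ ≤ f a := by
  have toward_b : ∀ t ∈ Ioo (0 : ℝ) 1, f b + (1 - t) * φ ‖a - b‖ ≤ f a := by
    rintro t ⟨ht₀, ht₁⟩
    have ht : 0 ≤ 1 - t := sub_nonneg.2 ht₁.le
    have concave := hf.2 ha hb ht ht₀.le (sub_add_cancel 1 t)
    have le_max := isMaxOn_iff.1 hmax _ (hf.1 ha hb ht ht₀.le (sub_add_cancel 1 t))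
    simp only [smul_eq_mul] at concave
    refine le_of_mul_le_mul_left ?_ ht₀
    linarith
  have tendsto_zero : Tendsto (fun t : ℝ ↦ f b + (1 - t) * φ ‖a - b‖) (𝓝[>] 0)
      (𝓝 (f b + φ ‖a - b‖)) := by
    have cont : Continuous fun t : ℝ ↦ f b + (1 - t) * φ ‖a - b‖ := by fun_prop
    simpa using (cont.tendsto 0).mono_left nhdsWithin_le_nhds
  exact le_of_tendsto tendsto_zero
    (eventually_of_mem (Ioo_mem_nhdsGT one_pos) toward_b)

section InnerProductSpace

variable {E : Type*} [NormedAddCommGroup E] [InnerProductSpace ℝ E]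

theorem norm_sub_sq_four_point (x₁ x₂ y₁ y₂ : E) :
    ‖x₂ - y₁‖ ^ 2 - ‖x₁ - y₁‖ ^ 2 + (‖x₁ - y₂‖ ^ 2 - ‖x₂ - y₂‖ ^ 2) =
      2 * inner ℝ (x₁ - x₂) (y₁ - y₂) := by
  simp only [norm_sub_sq_real, inner_sub_left, inner_sub_right]
  ring

theorem strongConcaveOn_sub_half_mul_norm_sub_sq {s : Set E} {G : E → ℝ} (hG : ConcaveOn ℝ s G)
    (ℓ : ℝ) (x : E) : StrongConcaveOn s ℓ fun y ↦ G y - ℓ / 2 * ‖x - y‖ ^ 2 := by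
  rw [strongConcaveOn_iff_convex]
  have affine_part : ConcaveOn ℝ s fun y ↦ ℓ * inner ℝ x y - ℓ / 2 * ‖x‖ ^ 2 :=
    ((ℓ • innerₗ E x).concaveOn hG.1).sub (convexOn_const _ hG.1)
  refine (hG.add affine_part).congr fun y _ ↦ ?_
  simp only [Pi.add_apply, norm_sub_sq_real]
  ring

theorem mul_norm_sub_sq_le_of_isMaxOn_sub_norm_sub_sq {s : Set E} {G₁ G₂ : E → ℝ}
    (hG₁ : ConcaveOn ℝ s G₁) (hG₂ : ConcaveOn ℝ s G₂) {ℓ : ℝ} {x₁ x₂ y₁ y₂ : E}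
    (hy₁ : y₁ ∈ s) (hy₂ : y₂ ∈ s)
    (hmax₁ : IsMaxOn (fun y ↦ G₁ y - ℓ / 2 * ‖x₁ - y‖ ^ 2) s y₁)
    (hmax₂ : IsMaxOn (fun y ↦ G₂ y - ℓ / 2 * ‖x₂ - y‖ ^ 2) s y₂) :
    ℓ * ‖y₁ - y₂‖ ^ 2 ≤
      ℓ * inner ℝ (x₁ - x₂) (y₁ - y₂) + (G₁ y₁ - G₂ y₁) + (G₂ y₂ - G₁ y₂) := by
  have growth₁ := uniformConcaveOn_add_modulus_le_of_isMaxOn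
    (strongConcaveOn_sub_half_mul_norm_sub_sq hG₁ ℓ x₁) hmax₁ hy₁ hy₂
  have growth₂ := uniformConcaveOn_add_modulus_le_of_isMaxOn
    (strongConcaveOn_sub_half_mul_norm_sub_sq hG₂ ℓ x₂) hmax₂ hy₂ hy₁
  rw [norm_sub_rev y₂ y₁] at growth₂
  linear_combination growth₁ + growth₂ + ℓ / 2 * norm_sub_sq_four_point x₁ x₂ y₁ y₂

theorem maximizer_dist_estimate_general {ι : Type*} [Nonempty ι] {S : Set E} {F : ι → E → ℝ}
    (hF : ∀ i, ConvexOn ℝ S (F i)) {ℓ : ℝ} (hℓ : 0 < ℓ) {x₁ x₂ y₁ y₂ : E}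
    (hbdd : ∀ y ∈ S, BddBelow (range fun i ↦ F i x₁ - F i y))
    (hbdd_abs : BddAbove (range fun i ↦ |F i x₁ - F i x₂|)) (hy₁ : y₁ ∈ S) (hy₂ : y₂ ∈ S)
    (hmax₁ : IsMaxOn (fun y ↦ ⨅ i, (F i x₁ - F i y - ℓ / 2 * ‖x₁ - y‖ ^ 2)) S y₁)
    (hmax₂ : IsMaxOn (fun y ↦ ⨅ i, (F i x₂ - F i y - ℓ / 2 * ‖x₂ - y‖ ^ 2)) S y₂) :
    ‖y₁ - y₂‖ ≤ 1 / 2 * ‖x₁ - x₂‖ +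
      √(1 / 4 * ‖x₁ - x₂‖ ^ 2 + 2 / ℓ * ⨆ i, |F i x₁ - F i x₂|) := by
  have hbdd₂ : ∀ y ∈ S, BddBelow (range fun i ↦ F i x₂ - F i y) := fun y hy ↦
    bddBelow_range_of_bddAbove_range_abs_sub (hbdd y hy) (by simpa using hbdd_abs)
  have concave (x : E) (i) : ConcaveOn ℝ S fun y ↦ F i x - F i y :=
    (concaveOn_const (F i x) (hF i).1).sub (hF i)
  have stability := mul_norm_sub_sq_le_of_isMaxOn_sub_norm_sub_sq
    (concaveOn_ciInf (concave x₁) hbdd) (concaveOn_ciInf (concave x₂) hbdd₂) hy₁ hy₂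
    ((isMaxOn_ciInf_sub_iff hy₁ hbdd).1 hmax₁) ((isMaxOn_ciInf_sub_iff hy₂ hbdd₂).1 hmax₂)
  set M := ⨆ i, |F i x₁ - F i x₂|
  have abs_le_M (i) : |F i x₁ - F i x₂| ≤ M := le_ciSup hbdd_abs i
  have gap_y₁ : (⨅ i, (F i x₁ - F i y₁)) - ⨅ i, (F i x₂ - F i y₁) ≤ M :=
    ciInf_sub_ciInf_le (hbdd y₁ hy₁) fun i ↦ by linarith [(abs_le.1 (abs_le_M i)).2]
  have gap_y₂ : (⨅ i, (F i x₂ - F i y₂)) - ⨅ i, (F i x₁ - F i y₂) ≤ M :=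
    ciInf_sub_ciInf_le (hbdd₂ y₂ hy₂) fun i ↦ by linarith [(abs_le.1 (abs_le_M i)).1]
  refine le_half_mul_add_sqrt_of_sq_le (le_of_mul_le_mul_left ?_ hℓ)
  calc ℓ * ‖y₁ - y₂‖ ^ 2
      ≤ ℓ * inner ℝ (x₁ - x₂) (y₁ - y₂) + M + M := by linarith
    _ ≤ ℓ * (‖x₁ - x₂‖ * ‖y₁ - y₂‖) + M + M := by gcongr; exact real_inner_le_norm _ _
    _ = ℓ * (‖x₁ - x₂‖ * ‖y₁ - y₂‖ + 2 / ℓ * M) := by field_simp; ring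

end InnerProductSpace

/-- Hölder-type estimate between the maximizers `y¹, y²` associated with the
regularized merit function at two points `x¹, x²`. -/
theorem maximizer_dist_estimate {n m : ℕ} (hm : 0 < m)
    (S : Set (EuclideanSpace ℝ (Fin n))) (hS : S.Nonempty)
    (hSclosed : IsClosed S) (hSconv : Convex ℝ S)
    (F : Fin m → EuclideanSpace ℝ (Fin n) → ℝ)
    (hFconv : ∀ i, ConvexOn ℝ Set.univ (F i))
    (ℓ : ℝ) (hℓ : 0 < ℓ)
    (x1 x2 y1 y2 : EuclideanSpace ℝ (Fin n))
    (hx1 : x1 ∈ S) (hx2 : x2 ∈ S) (hy1 : y1 ∈ S) (hy2 : y2 ∈ S)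
    (hy1max : ∀ y ∈ S,
      (⨅ i, (F i x1 - F i y - ℓ / 2 * ‖x1 - y‖ ^ 2)) ≤
        ⨅ i, (F i x1 - F i y1 - ℓ / 2 * ‖x1 - y1‖ ^ 2))
    (hy2max : ∀ y ∈ S,
      (⨅ i, (F i x2 - F i y - ℓ / 2 * ‖x2 - y‖ ^ 2)) ≤
        ⨅ i, (F i x2 - F i y2 - ℓ / 2 * ‖x2 - y2‖ ^ 2)) :
    ‖y1 - y2‖ ≤ 1 / 2 * ‖x1 - x2‖ +
      Real.sqrt (1 / 4 * ‖x1 - x2‖ ^ 2 + 2 / ℓ * ⨆ i, |F i x1 - F i x2|) := by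
  have : Nonempty (Fin m) := ⟨⟨0, hm⟩⟩
  exact maximizer_dist_estimate_general
    (fun i ↦ (hFconv i).subset (subset_univ S) hSconv) hℓ
    (fun _ _ ↦ (finite_range _).bddBelow) (finite_range _).bddAbove
    hy1 hy2 (isMaxOn_iff.2 hy1max) (isMaxOn_iff.2 hy2max)
end

section
/- For every ℓ > 0, the function u_ℓ is continuous on S. -/
/-- The regularized merit function
`u_ℓ(x) = max_{y ∈ S} min_i (F i x - F i y - (ℓ/2)‖x - y‖²)`. -/
noncomputable def meritU {n m : ℕ} (ℓ : ℝ) (S : Set (EuclideanSpace ℝ (Fin n)))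
    (F : Fin m → EuclideanSpace ℝ (Fin n) → ℝ)
    (x : EuclideanSpace ℝ (Fin n)) : ℝ :=
  sSup ((fun y => ⨅ i, (F i x - F i y - ℓ / 2 * ‖x - y‖ ^ 2)) '' S)

/-!
A convex function on `ℝⁿ` has an affine minorant, so the quadratic penalty drives
`F i x - F i y - ℓ/2 ‖x - y‖²`, and with it the minimum over `i`, to `-∞` as `y` leaves compact
sets, uniformly for `x` near any given point. Fixing a competitor `y₀ ∈ S`, points `y` outside
some compact set `K` therefore never beat `y₀`, and near the given point the supremum over `S`
agrees with the supremum over the compact set `closure (S ∩ K)`, which depends continuously on `x`.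
-/

open Filter Set Topology

section ConditionallyCompleteLinearOrder

variable {β α : Type*} [ConditionallyCompleteLinearOrder α] {f : β → α} {s t : Set β}

theorem csSup_image_inter_eq_of_forall_mem_diff_le {b : β} (hb : b ∈ s ∩ t)
    (hle : ∀ y ∈ s \ t, f y ≤ f b) : sSup (f '' (s ∩ t)) = sSup (f '' s) := by
  apply csSup_eq_csSup_of_forall_exists_le
  · rintro _ ⟨y, hy, rfl⟩
    exact ⟨f y, mem_image_of_mem f hy.1, le_rfl⟩
  · rintro _ ⟨y, hys, rfl⟩
    by_cases hyt : y ∈ t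
    · exact ⟨f y, mem_image_of_mem f ⟨hys, hyt⟩, le_rfl⟩
    · exact ⟨f b, mem_image_of_mem f hb, hle y ⟨hys, hyt⟩⟩

theorem csSup_image_closure [TopologicalSpace β] [TopologicalSpace α] [ClosedIicTopology α]
    (hf : Continuous f) (hs : s.Nonempty) (hbdd : BddAbove (f '' s)) :
    sSup (f '' closure s) = sSup (f '' s) :=
  ((isLUB_iff_of_subset_of_subset_closure (image_mono subset_closure)
    (image_closure_subset_closure_image hf)).1 (isLUB_csSup (hs.image f) hbdd)).csSup_eq
      (hs.closure.image f)

end ConditionallyCompleteLinearOrder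

section ParametricSupremum

variable {X Y α : Type*} [TopologicalSpace X] [TopologicalSpace Y]
  [ConditionallyCompleteLinearOrder α] [TopologicalSpace α] [OrderTopology α]

theorem continuousAt_sSup_image_of_eventually_le [R1Space Y] {φ : X → Y → α}
    (hφ : Continuous (Function.uncurry φ)) {S : Set Y} {x₀ : X} {y₀ : Y} (hy₀ : y₀ ∈ S)
    (hle : ∀ᶠ p in 𝓝 x₀ ×ˢ cocompact Y, φ p.1 p.2 ≤ φ p.1 y₀) :
    ContinuousAt (fun x => sSup (φ x '' S)) x₀ := by
  obtain ⟨U, hU, V, hV, hUV⟩ := eventually_prod_iff.1 hle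
  obtain ⟨K, hK, hKV⟩ := mem_cocompact.1 hV
  have hy₀K : y₀ ∈ S ∩ insert y₀ K := ⟨hy₀, mem_insert y₀ K⟩
  have hcompact : IsCompact (closure (S ∩ insert y₀ K)) :=
    (hK.insert y₀).closure_of_subset inter_subset_right
  refine (hcompact.continuous_sSup hφ).continuousAt.congr ?_
  filter_upwards [hU] with x hx
  have hφx : Continuous (φ x) := hφ.comp (Continuous.prodMk_right x)
  have hbdd : BddAbove (φ x '' (S ∩ insert y₀ K)) :=
    (hcompact.image hφx).bddAbove.mono (image_mono subset_closure)
  have hout : ∀ y ∈ S \ insert y₀ K, φ x y ≤ φ x y₀ := fun y hy =>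
    hUV hx (hKV fun hyK => hy.2 (mem_insert_of_mem y₀ hyK))
  calc
    sSup (φ x '' closure (S ∩ insert y₀ K)) = sSup (φ x '' (S ∩ insert y₀ K)) :=
      csSup_image_closure hφx ⟨y₀, hy₀K⟩ hbdd
    _ = sSup (φ x '' S) := csSup_image_inter_eq_of_forall_mem_diff_le hy₀K hout

theorem continuous_sSup_image_of_tendsto_atBot [R1Space Y] [NoMinOrder α] {φ : X → Y → α}
    (hφ : Continuous (Function.uncurry φ)) {S : Set Y} (hS : S.Nonempty)
    (hlim : ∀ x₀, Tendsto (Function.uncurry φ) (𝓝 x₀ ×ˢ cocompact Y) atBot) :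
    Continuous fun x => sSup (φ x '' S) := by
  obtain ⟨y₀, hy₀⟩ := hS
  refine continuous_iff_continuousAt.2 fun x₀ =>
    continuousAt_sSup_image_of_eventually_le hφ hy₀ ?_
  obtain ⟨a, ha⟩ := exists_lt (φ x₀ y₀)
  have hnear : ∀ᶠ x in 𝓝 x₀, a < φ x y₀ :=
    (hφ.comp (Continuous.prodMk_left y₀)).continuousAt.eventually_const_lt ha
  filter_upwards [(hlim x₀).eventually_le_atBot a, hnear.prod_inl (cocompact Y)] with p hp hpa
  exact hp.trans hpa.le

theorem continuous_ciInf_of_finite {ι : Type*} [Finite ι] [Nonempty ι] {f : ι → X → α}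
    (hf : ∀ i, Continuous (f i)) : Continuous fun x => ⨅ i, f i x := by
  have := Fintype.ofFinite ι
  simp only [← Finset.inf'_univ_eq_ciInf]
  exact Continuous.finset_inf'_apply Finset.univ_nonempty fun i _ => hf i

end ParametricSupremum

theorem tendsto_dist_nhds_prod_cocompact_atTop {M : Type*} [PseudoMetricSpace M] [ProperSpace M]
    (x₀ : M) : Tendsto (fun p : M × M => dist p.1 p.2) (𝓝 x₀ ×ˢ cocompact M) atTop := by
  have hfar : Tendsto (fun p : M × M => dist x₀ p.2) (𝓝 x₀ ×ˢ cocompact M) atTop :=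
    (tendsto_dist_left_cocompact_atTop x₀).comp tendsto_snd
  have hnear : Tendsto (fun p : M × M => -dist x₀ p.1) (𝓝 x₀ ×ˢ cocompact M)
      (𝓝 (-dist x₀ x₀)) :=
    (tendsto_const_nhds.dist tendsto_fst).neg
  refine tendsto_atTop_mono (fun p => ?_) (hfar.atTop_add hnear)
  linarith [dist_triangle x₀ p.1 p.2]

theorem tendsto_mul_sub_mul_sq_atBot {a : ℝ} (ha : 0 < a) (b : ℝ) :
    Tendsto (fun t : ℝ => b * t - a * t ^ 2) atTop atBot := by
  have hlin : Tendsto (fun t : ℝ => b - a * t) atTop atBot :=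
    tendsto_const_nhds.add_atBot (tendsto_neg_atTop_atBot.comp (tendsto_id.const_mul_atTop ha))
  refine (tendsto_id.atTop_mul_atBot₀ hlin).congr fun t => ?_
  simp only [id_eq]
  ring

theorem exists_affine_le_of_convexOn_univ {E : Type*} [AddCommGroup E] [Module ℝ E]
    [TopologicalSpace E] [IsTopologicalAddGroup E] [ContinuousSMul ℝ E] [LocallyConvexSpace ℝ E]
    {g : E → ℝ} (hconv : ConvexOn ℝ univ g) (hg : LowerSemicontinuous g) :
    ∃ (l : E →L[ℝ] ℝ) (c : ℝ), ∀ y, l y + c ≤ g y := by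
  obtain ⟨l, c, hl, -⟩ := hconv.exists_affine_le_of_lt (𝕜 := ℝ) (mem_univ 0) (sub_one_lt (g 0))
    isClosed_univ (hg.lowerSemicontinuousOn univ)
  exact ⟨l, c, fun y => hl ⟨y, mem_univ y⟩⟩

section ProperSpace

variable {E : Type*} [SeminormedAddCommGroup E] [NormedSpace ℝ E] [ProperSpace E]

theorem tendsto_sub_sub_mul_sq_norm_atBot_of_affine_le {g : E → ℝ} {l : E →L[ℝ] ℝ}
    {c a : ℝ} (hl : ∀ y, l y + c ≤ g y) (ha : 0 < a) {x₀ : E} (hg : ContinuousAt g x₀) :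
    Tendsto (fun p : E × E => g p.1 - g p.2 - a * ‖p.1 - p.2‖ ^ 2)
      (𝓝 x₀ ×ˢ cocompact E) atBot := by
  have hgap : Tendsto (fun p : E × E => g p.1 - l p.1 - c) (𝓝 x₀ ×ˢ cocompact E)
      (𝓝 (g x₀ - l x₀ - c)) :=
    ((hg.sub l.continuous.continuousAt).sub_const c).comp tendsto_fst
  have hnorm : Tendsto (fun p : E × E => ‖p.1 - p.2‖) (𝓝 x₀ ×ˢ cocompact E) atTop := by
    simpa only [dist_eq_norm] using tendsto_dist_nhds_prod_cocompact_atTop x₀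
  have hquad := (tendsto_mul_sub_mul_sq_atBot ha ‖l‖).comp hnorm
  refine tendsto_atBot_mono (fun p => ?_) (hgap.add_atBot hquad)
  have hlip : l p.1 - l p.2 ≤ ‖l‖ * ‖p.1 - p.2‖ := by
    rw [← map_sub]
    exact (le_abs_self _).trans (l.le_opNorm _)
  simp only [Function.comp_apply]
  linarith [hl p.2]

theorem meritU_continuousOn_general {ι : Type*} [Finite ι] {F : ι → E → ℝ}
    (hF : ∀ i, Continuous (F i)) {i₀ : ι} (hconv : ConvexOn ℝ univ (F i₀)) {S : Set E}
    (hS : S.Nonempty) {ℓ : ℝ} (hℓ : 0 < ℓ) :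
    Continuous fun x => sSup ((fun y => ⨅ i, (F i x - F i y - ℓ / 2 * ‖x - y‖ ^ 2)) '' S) := by
  have : Nonempty ι := ⟨i₀⟩
  obtain ⟨l, c, hl⟩ := exists_affine_le_of_convexOn_univ hconv (hF i₀).lowerSemicontinuous
  refine continuous_sSup_image_of_tendsto_atBot
    (continuous_ciInf_of_finite fun i => by fun_prop) hS fun x₀ => ?_
  exact tendsto_atBot_mono (fun p => ciInf_le (finite_range _).bddBelow i₀)
    (tendsto_sub_sub_mul_sq_norm_atBot_of_affine_le hl (half_pos hℓ) (hF i₀).continuousAt)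

end ProperSpace

/-- for every `ℓ > 0`, `u_ℓ` is continuous on `S`. -/
theorem meritU_continuousOn {n m : ℕ} (hm : 0 < m)
    (S : Set (EuclideanSpace ℝ (Fin n))) (hS : S.Nonempty)
    (hSclosed : IsClosed S) (hSconv : Convex ℝ S)
    (F : Fin m → EuclideanSpace ℝ (Fin n) → ℝ)
    (hFconv : ∀ i, ConvexOn ℝ Set.univ (F i))
    (ℓ : ℝ) (hℓ : 0 < ℓ) :
    ContinuousOn (meritU ℓ S F) S :=
  (meritU_continuousOn_general
    (fun i => continuousOn_univ.1 ((hFconv i).continuousOn isOpen_univ))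
    (hFconv ⟨0, hm⟩) hS hℓ).continuousOn
end

section
/- Fix x ∈ S and ℓ > 0. Define φ on the positive orthant of ℝᵐ by φ(λ) = Σ_{i=1}^m λ_i F_i(x) − inf_{y∈S} ( Σ_{i=1}^m λ_i F_i(y) + (ℓ/2)‖x − y‖² ). Then φ is differentiable at every λ ∈ ℝᵐ with λ_i > 0 for all i, and its gradient is given componentwise by (∇φ(λ))_i = F_i(x) − F_i(p(λ)), where p(λ) ∈ S is the unique minimizer over y ∈ S of Σ_{i=1}^m λ_i F_i(y) + (ℓ/2)‖x − y‖². -/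
/-!
Let `v` be the value function of a family `t ↦ F y t + g y` that is affine in the parameter `t`,
with minimizers `p t`. Comparing the minimizers at two parameters gives
`v t ≤ v s + F (p s) (t - s)`, so `F (p s)` is a supergradient of `v` at `s`. A function with
supergradients that are continuous at a point is differentiable there, so everything reduces to
the continuity of `p`. Since `g` is uniformly convex, the objective at the base parameter exceeds
its minimum by a fixed amount on every small sphere around its minimizer; a nearby parameter
preserves this gap, and convexity then traps the new minimizer inside the sphere.
-/

open AffineMap Filter Topology

theorem sInf_image_eq_of_isMinOn {α β : Type*} [ConditionallyCompleteLattice β] {S : Set α}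
    {f : α → β} {q : α} (hq : q ∈ S) (hmin : IsMinOn f S q) : sInf (f '' S) = f q :=
  IsLeast.csInf_eq ⟨Set.mem_image_of_mem f hq, Set.forall_mem_image.2 (isMinOn_iff.1 hmin)⟩

section MinimizerStability

variable {E : Type*} [NormedAddCommGroup E] [NormedSpace ℝ E] {S : Set E}

theorem dist_lt_of_quasiconvexOn_of_lt_on_sphere {h : E → ℝ} {q y : E} {ε : ℝ}
    (hh : QuasiconvexOn ℝ S h) (hq : q ∈ S) (hy : y ∈ S) (hyq : h y ≤ h q) (hε : 0 < ε)
    (hsphere : ∀ z ∈ S, dist z q = ε → h q < h z) : dist y q < ε := by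
  by_contra! hfar
  have hdist : 0 < dist q y := dist_comm y q ▸ hε.trans_le hfar
  have hratio : ε / dist q y ∈ Set.Icc (0 : ℝ) 1 :=
    ⟨by positivity, (div_le_one hdist).2 (dist_comm y q ▸ hfar)⟩
  obtain ⟨hzS, hzq⟩ := (hh (h q)).lineMap_mem ⟨hq, le_rfl⟩ ⟨hy, hyq⟩ hratio
  refine (hsphere _ hzS ?_).not_ge hzq
  rw [dist_lineMap_left, Real.norm_of_nonneg hratio.1, div_mul_cancel₀ _ hdist.ne']

theorem add_modulus_le_of_uniformConvexOn_of_isMinOn {φ : ℝ → ℝ} {f : E → ℝ} {q y : E}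
    (hf : UniformConvexOn S φ f) (hq : q ∈ S) (hmin : IsMinOn f S q) (hy : y ∈ S) :
    f q + φ (dist y q) ≤ f y := by
  have hstep : ∀ b ∈ Set.Ioo (0 : ℝ) 1, f q + (1 - b) * φ (dist y q) ≤ f y := by
    intro b ⟨hb₀, hb₁⟩
    have hmem : b • y + (1 - b) • q ∈ S := hf.1 hy hq hb₀.le (by linarith) (by ring)
    have hconv := (isMinOn_iff.1 hmin _ hmem).trans
      (hf.2 hy hq hb₀.le (by linarith) (by ring))
    rw [← dist_eq_norm, smul_eq_mul, smul_eq_mul] at hconv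
    refine le_of_mul_le_mul_left ?_ hb₀
    linarith
  have hlim : Tendsto (fun b : ℝ => f q + (1 - b) * φ (dist y q)) (𝓝[>] 0)
      (𝓝 (f q + φ (dist y q))) := by
    refine tendsto_nhdsWithin_of_tendsto_nhds (Continuous.tendsto' (by fun_prop) _ _ ?_)
    ring
  exact le_of_tendsto hlim (eventually_of_mem (Ioo_mem_nhdsGT one_pos) hstep)

theorem tendsto_of_isMinOn_of_tendstoUniformlyOn {T : Type*} {l : Filter T} {f : T → E → ℝ}
    {f₀ : E → ℝ} {φ : ℝ → ℝ} {p : T → E} {q : E} {U : Set E} (hq : q ∈ S)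
    (hφ : ∀ r, 0 < r → 0 < φ r) (hgrowth : ∀ y ∈ S, f₀ q + φ (dist y q) ≤ f₀ y)
    (hU : U ∈ 𝓝[S] q) (hlim : TendstoUniformlyOn f f₀ l U)
    (hconv : ∀ᶠ t in l, QuasiconvexOn ℝ S (f t))
    (hp : ∀ᶠ t in l, p t ∈ S ∧ IsMinOn (f t) S (p t)) :
    Tendsto p l (𝓝 q) := by
  obtain ⟨δ, hδ, hball⟩ := Metric.mem_nhdsWithin_iff.1 hU
  refine Metric.tendsto_nhds.2 fun ε hε => ?_
  obtain ⟨r, hr, hrmin⟩ := exists_between (lt_min hε hδ)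
  obtain ⟨hrε, hrδ⟩ := lt_min_iff.1 hrmin
  have hqU : q ∈ U := hball ⟨Metric.mem_ball_self hδ, hq⟩
  filter_upwards [Metric.tendstoUniformlyOn_iff.1 hlim _ (half_pos (hφ r hr)), hconv, hp]
    with t hclose hquasi ⟨hpS, hpmin⟩
  refine (dist_lt_of_quasiconvexOn_of_lt_on_sphere hquasi hq hpS
    (isMinOn_iff.1 hpmin q hq) hr fun z hz hzq => ?_).trans hrε
  have hzU : z ∈ U := hball ⟨Metric.mem_ball.2 (hzq ▸ hrδ), hz⟩
  have hgap : f₀ q + φ r ≤ f₀ z := hzq ▸ hgrowth z hz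
  have hclose_z := abs_sub_lt_iff.1 (hclose z hzU)
  have hclose_q := abs_sub_lt_iff.1 (hclose q hqU)
  linarith [hclose_z.1, hclose_q.2]

end MinimizerStability

section ParametricMinimization

variable {V : Type*} [NormedAddCommGroup V] [NormedSpace ℝ V] {a : V}

theorem hasFDerivAt_of_continuousAt_supergradient {v : V → ℝ} {v' : V → V →L[ℝ] ℝ}
    (hcont : ContinuousAt v' a) (hbase : ∀ᶠ t in 𝓝 a, v t ≤ v a + v' a (t - a))
    (hnear : ∀ᶠ t in 𝓝 a, v a ≤ v t + v' t (a - t)) : HasFDerivAt v (v' a) a := by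
  refine .of_isLittleO (Asymptotics.isLittleO_iff.2 fun c hc => ?_)
  filter_upwards [Metric.continuousAt_iff'.1 hcont c hc, hbase, hnear] with t hclose hle hge
  have hremainder : |v t - v a - v' a (t - a)| ≤ |(v' t - v' a) (t - a)| := by
    rw [← neg_sub t a, map_neg] at hge
    rw [sub_apply, abs_of_nonpos (by linarith), abs_of_nonpos (by linarith)]
    linarith
  exact hremainder.trans ((v' t - v' a).le_of_opNorm_le (dist_eq_norm (v' t) _ ▸ hclose.le) _)

theorem exists_tendstoUniformlyOn_apply_add {X : Type*} [TopologicalSpace X] {S : Set X}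
    {F : X → V →L[ℝ] ℝ} {q : X} (hF : ContinuousWithinAt F S q) (g : X → ℝ) (a : V) :
    ∃ U ∈ 𝓝[S] q, TendstoUniformlyOn (fun t y => F y t + g y) (fun y => F y a + g y) (𝓝 a) U := by
  refine ⟨_, hF.norm.eventually_lt_const (lt_add_one ‖F q‖), Metric.tendstoUniformlyOn_iff.2 ?_⟩
  intro ε hε
  have hsmall : ∀ᶠ t in 𝓝 a, (‖F q‖ + 1) * ‖a - t‖ < ε :=
    (Continuous.tendsto' (by fun_prop) a 0 (by simp)).eventually_lt_const hε
  filter_upwards [hsmall] with t ht y hy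
  rw [dist_add_right, dist_eq_norm, ← map_sub]
  exact ((F y).le_of_opNorm_le (le_of_lt hy) _).trans_lt ht

variable {E : Type*} [NormedAddCommGroup E] [NormedSpace ℝ E] {S : Set E}
  {F : E → V →L[ℝ] ℝ} {g : E → ℝ} {φ : ℝ → ℝ} {p : V → E}

theorem continuousAt_of_isMinOn_apply_add (hg : UniformConvexOn S φ g)
    (hφ : ∀ r, r ≠ 0 → 0 < φ r) (hconv : ∀ᶠ t in 𝓝 a, ConvexOn ℝ S fun y => F y t)
    (hcont : ContinuousWithinAt F S (p a))
    (hp : ∀ᶠ t in 𝓝 a, p t ∈ S ∧ IsMinOn (fun y => F y t + g y) S (p t)) :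
    ContinuousAt p a := by
  obtain ⟨hpS, hpmin⟩ := hp.self_of_nhds
  obtain ⟨U, hU, hlim⟩ := exists_tendstoUniformlyOn_apply_add hcont g a
  have huniform : UniformConvexOn S φ fun y => F y a + g y := by
    simpa only [zero_add] using! hconv.self_of_nhds.uniformConvexOn_zero.add hg
  exact tendsto_of_isMinOn_of_tendstoUniformlyOn hpS (fun r hr => hφ r hr.ne')
    (fun _ => add_modulus_le_of_uniformConvexOn_of_isMinOn huniform hpS hpmin) hU hlim
    (hconv.mono fun t ht => (ht.add (hg.strictConvexOn hφ).convexOn).quasiconvexOn) hp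

theorem hasFDerivAt_sInf_image_apply_add (hg : UniformConvexOn S φ g)
    (hφ : ∀ r, r ≠ 0 → 0 < φ r) (hconv : ∀ᶠ t in 𝓝 a, ConvexOn ℝ S fun y => F y t)
    (hcont : ContinuousWithinAt F S (p a))
    (hp : ∀ᶠ t in 𝓝 a, p t ∈ S ∧ IsMinOn (fun y => F y t + g y) S (p t)) :
    HasFDerivAt (fun t => sInf ((fun y => F y t + g y) '' S)) (F (p a)) a := by
  obtain ⟨hpaS, hpamin⟩ := hp.self_of_nhds
  have hvalue : ∀ᶠ t in 𝓝 a, sInf ((fun y => F y t + g y) '' S) = F (p t) t + g (p t) :=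
    hp.mono fun t ht => sInf_image_eq_of_isMinOn ht.1 ht.2
  have hpcont : Tendsto p (𝓝 a) (𝓝[S] p a) :=
    tendsto_nhdsWithin_iff.2 ⟨continuousAt_of_isMinOn_apply_add hg hφ hconv hcont hp,
      hp.mono fun _ => And.left⟩
  refine HasFDerivAt.congr_of_eventuallyEq ?_ hvalue
  refine hasFDerivAt_of_continuousAt_supergradient (v' := fun t => F (p t))
    (hcont.tendsto.comp hpcont) ?_ ?_
  · filter_upwards [hp] with t ⟨_, hpmin⟩
    have hcompare := isMinOn_iff.1 hpmin (p a) hpaS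
    rw [map_sub]
    linarith
  · filter_upwards [hp] with t ⟨hpS, _⟩
    have hcompare := isMinOn_iff.1 hpamin (p t) hpS
    rw [map_sub]
    linarith

end ParametricMinimization

section WeightedSum

theorem convexOn_finset_sum {ι 𝕜 E β : Type*} [Semiring 𝕜] [PartialOrder 𝕜] [AddCommMonoid E]
    [SMul 𝕜 E] [AddCommMonoid β] [PartialOrder β] [IsOrderedAddMonoid β] [Module 𝕜 β] {S : Set E}
    {s : Finset ι} {f : ι → E → β} (hS : Convex 𝕜 S) (hf : ∀ i ∈ s, ConvexOn 𝕜 S (f i)) :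
    ConvexOn 𝕜 S fun y => ∑ i ∈ s, f i y := by
  simpa only [Finset.sum_fn] using
    Finset.sum_induction f (ConvexOn 𝕜 S) (fun _ _ => ConvexOn.add) (convexOn_const 0 hS) hf

variable {ι E : Type*} [Fintype ι] [NormedAddCommGroup E] [InnerProductSpace ℝ E] {S : Set E}

theorem strongConvexOn_half_mul_norm_sub_sq (hS : Convex ℝ S) (ℓ : ℝ) (x : E) :
    StrongConvexOn S ℓ fun y => ℓ / 2 * ‖x - y‖ ^ 2 := by
  have hexpand : (fun y => ℓ / 2 * ‖x - y‖ ^ 2 - ℓ / 2 * ‖y‖ ^ 2) =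
      fun y => (-ℓ • innerₗ E x) y + ℓ / 2 * ‖x‖ ^ 2 := by
    funext y
    rw [norm_sub_sq_real, LinearMap.smul_apply, innerₗ_apply_apply, smul_eq_mul]
    ring
  rw [strongConvexOn_iff_convex, hexpand]
  exact (LinearMap.convexOn _ hS).add_const _

theorem dual_objective_hasFDerivAt_general {F : ι → E → ℝ} {ℓ : ℝ} {p : (ι → ℝ) → E}
    {lam : ι → ℝ} (hS : Convex ℝ S) (hF : ∀ i, ConvexOn ℝ S (F i))
    (hcont : ∀ i, ContinuousWithinAt (F i) S (p lam)) (hℓ : 0 < ℓ) (x : E)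
    (hpmem : ∀ t : ι → ℝ, (∀ i, 0 < t i) → p t ∈ S)
    (hpmin : ∀ t : ι → ℝ, (∀ i, 0 < t i) →
      IsMinOn (fun y => (∑ i, t i * F i y) + ℓ / 2 * ‖x - y‖ ^ 2) S (p t))
    (hlam : ∀ i, 0 < lam i) :
    HasFDerivAt
      (fun t : ι → ℝ => (∑ i, t i * F i x) -
        sInf ((fun y => (∑ i, t i * F i y) + ℓ / 2 * ‖x - y‖ ^ 2) '' S))
      (∑ i, (F i x - F i (p lam)) • (ContinuousLinearMap.proj i : (ι → ℝ) →L[ℝ] ℝ)) lam := by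
  let L : E → (ι → ℝ) →L[ℝ] ℝ := fun y => ∑ i, F i y • ContinuousLinearMap.proj i
  have hL : ∀ y t, L y t = ∑ i, t i * F i y := fun y t => by simp [L, mul_comm]
  have hpos : ∀ᶠ t in 𝓝 lam, ∀ i, 0 < t i :=
    eventually_all.2 fun i => (continuous_apply i).continuousAt.eventually_const_lt (hlam i)
  have hLcont : ContinuousWithinAt L S (p lam) :=
    tendsto_finsetSum _ fun i _ => (hcont i).smul continuousWithinAt_const
  have hvalue : HasFDerivAt (fun t => sInf ((fun y => L y t + ℓ / 2 * ‖x - y‖ ^ 2) '' S))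
      (L (p lam)) lam := by
    refine hasFDerivAt_sInf_image_apply_add (strongConvexOn_half_mul_norm_sub_sq hS ℓ x)
      (fun r hr => by positivity) ?_ hLcont ?_
    · filter_upwards [hpos] with t ht
      simpa only [hL] using! convexOn_finset_sum hS fun i _ => (hF i).smul (ht i).le
    · filter_upwards [hpos] with t ht
      simpa only [hL] using And.intro (hpmem t ht) (hpmin t ht)
  have hgradient : L x - L (p lam) =
      ∑ i, (F i x - F i (p lam)) • (ContinuousLinearMap.proj i : (ι → ℝ) →L[ℝ] ℝ) := by
    rw [← Finset.sum_sub_distrib]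
    exact Finset.sum_congr rfl fun i _ => (sub_smul _ _ _).symm
  simpa only [hL, hgradient] using (L x).hasFDerivAt.fun_sub hvalue

end WeightedSum

/-- the dual objective
`φ(λ) = Σ_i λ_i F_i(x) - inf_{y ∈ S} (Σ_i λ_i F_i(y) + (ℓ/2)‖x - y‖²)`
is differentiable at every `λ` with `λ_i > 0` for all `i`, with gradient whose `i`-th
component is `F_i(x) - F_i(p(λ))`, where `p(λ)` is the unique minimizer over `S` of
`y ↦ Σ_i λ_i F_i(y) + (ℓ/2)‖x - y‖²`. -/
theorem dual_objective_hasFDerivAt {n m : ℕ} (hm : 0 < m)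
    (S : Set (EuclideanSpace ℝ (Fin n))) (hS : S.Nonempty)
    (hSclosed : IsClosed S) (hSconv : Convex ℝ S)
    (F : Fin m → EuclideanSpace ℝ (Fin n) → ℝ)
    (hFconv : ∀ i, ConvexOn ℝ Set.univ (F i))
    (ℓ : ℝ) (hℓ : 0 < ℓ)
    (x : EuclideanSpace ℝ (Fin n)) (hx : x ∈ S)
    (p : (Fin m → ℝ) → EuclideanSpace ℝ (Fin n))
    (hpmem : ∀ lam : Fin m → ℝ, (∀ i, 0 < lam i) → p lam ∈ S)
    (hpmin : ∀ lam : Fin m → ℝ, (∀ i, 0 < lam i) → ∀ y ∈ S,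
      (∑ i, lam i * F i (p lam)) + ℓ / 2 * ‖x - p lam‖ ^ 2 ≤
        (∑ i, lam i * F i y) + ℓ / 2 * ‖x - y‖ ^ 2)
    (lam : Fin m → ℝ) (hlam : ∀ i, 0 < lam i) :
    HasFDerivAt
      (fun t : Fin m → ℝ =>
        (∑ i, t i * F i x) -
          sInf ((fun y => (∑ i, t i * F i y) + ℓ / 2 * ‖x - y‖ ^ 2) '' S))
      (∑ i, (F i x - F i (p lam)) •
        (ContinuousLinearMap.proj i : (Fin m → ℝ) →L[ℝ] ℝ))
      lam :=
  dual_objective_hasFDerivAt_general hSconv (fun i => (hFconv i).subset S.subset_univ hSconv)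
    (fun i => ((hFconv i).continuousOn isOpen_univ _ trivial).mono S.subset_univ)
    hℓ x hpmem (fun t ht => isMinOn_iff.2 (hpmin t ht)) hlam
end

section
/- Let ℓ > 0 and x ∈ S. Let Λ(x) ⊆ Δᵐ be the set of minimizers over λ ∈ Δᵐ of Σ_{i=1}^m λ_i F_i(x) − inf_{y∈S}( Σ_{i=1}^m λ_i F_i(y) + (ℓ/2)‖x − y‖² ). Then for every z ∈ S, the directional derivative u_ℓ′(x; z − x) exists and u_ℓ′(x; z − x) = inf_{λ∈Λ(x)} { Σ_{i=1}^m λ_i F_i′(x; z − x) − ℓ (x − p(λ))ᵀ(z − x) }, where p(λ) ∈ S is the unique minimizer over y ∈ S of Σ_{i=1}^m λ_i F_i(y) + (ℓ/2)‖x − y‖². -/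
open scoped RealInnerProductSpace

/-- Directional derivative: `h′(x; d) = v` means `(h(x + t d) - h x)/t → v` as `t ↘ 0`. -/
def HasDirDeriv {n : ℕ} (h : EuclideanSpace ℝ (Fin n) → ℝ)
    (x d : EuclideanSpace ℝ (Fin n)) (v : ℝ) : Prop :=
  Filter.Tendsto (fun t : ℝ => (h (x + t • d) - h x) / t)
    (nhdsWithin 0 (Set.Ioi 0)) (nhds v)

/-- The dual objective `ψ(λ) = Σ_i λ_i F_i(x) - inf_{y ∈ S}(Σ_i λ_i F_i(y) + (ℓ/2)‖x-y‖²)`. -/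
noncomputable def dualObjU {n m : ℕ} (ℓ : ℝ) (S : Set (EuclideanSpace ℝ (Fin n)))
    (F : Fin m → EuclideanSpace ℝ (Fin n) → ℝ)
    (x : EuclideanSpace ℝ (Fin n)) (lam : Fin m → ℝ) : ℝ :=
  (∑ i, lam i * F i x) -
    sInf ((fun y => (∑ i, lam i * F i y) + ℓ / 2 * ‖x - y‖ ^ 2) '' S)

/-!
By Sion's minimax theorem, `u_ℓ(x)` is the minimum over the simplex of the dual objective
`ψ(x, λ) = Σ λ_i F_i(x) - e_λ(x)`, where `e_λ` is the Moreau envelope of `Σ λ_i F_i` on `S`.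
Strong convexity of the proximal problem gives
`|e_λ(x + d) - e_λ(x) - ℓ⟪x - p(λ), d⟫| ≤ (ℓ/2)‖d‖²`, with a bound independent of `λ`. So the
difference quotients of `ψ(·, λ)` along `d` converge uniformly in `λ`, and Danskin's theorem
differentiates the minimum. The continuity in `λ` of the limiting quotient, on which Danskin's
theorem rests, comes from the uniform convergence rather than from a study of `p`.
-/

section

open Set Filter Topology

section Danskin

theorem eventually_slope_sInf_image_lt {α : Type*} {K : Set α} {f : α → ℝ} {g : ℝ → α → ℝ}
    {x : α} {v b : ℝ} (hg : ∀ t, BddBelow (g t '' K)) (hxK : x ∈ K) (hx : IsMinOn f K x)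
    (hslope : Tendsto (fun t ↦ (g t x - f x) / t) (𝓝[>] 0) (𝓝 v)) (hb : v < b) :
    ∀ᶠ t in 𝓝[>] (0 : ℝ), (sInf (g t '' K) - sInf (f '' K)) / t < b := by
  have hmin : sInf (f '' K) = f x := (hx.isGLB hxK).csInf_eq ⟨_, mem_image_of_mem f hxK⟩
  filter_upwards [hslope.eventually_lt_const hb, self_mem_nhdsWithin] with t htb (ht : 0 < t)
  refine lt_of_le_of_lt ?_ htb
  rw [hmin]
  gcongr
  exact csInf_le (hg t) (mem_image_of_mem (g t) hxK)

variable {α : Type*} [TopologicalSpace α] {K : Set α}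

theorem eventually_forall_add_mul_le {f h : α → ℝ} {m a : ℝ} (hK : IsCompact K)
    (hf : ContinuousOn f K) (hh : ContinuousOn h K) (hm : ∀ x ∈ K, m ≤ f x)
    (ha : ∀ x ∈ K, f x = m → a < h x) :
    ∀ᶠ t in 𝓝[>] (0 : ℝ), ∀ x ∈ K, m + t * a ≤ f x + t * h x := by
  have hB : IsCompact (K ∩ h ⁻¹' Iic a) :=
    hh.lowerSemicontinuousOn.isCompact_inter_preimage_Iic hK a
  obtain ⟨m', hmm', hm'⟩ : ∃ m', m < m' ∧ ∀ x ∈ K ∩ h ⁻¹' Iic a, m' ≤ f x :=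
    hB.exists_forall_le' (hf.mono inter_subset_left) fun x hx ↦
      (hm x hx.1).lt_of_ne fun hfx ↦ (ha x hx.1 hfx.symm).not_ge hx.2
  obtain ⟨c, hc⟩ := hK.bddBelow_image hh
  have hsmall : ∀ᶠ t in 𝓝[>] (0 : ℝ), t * (a - c) < m' - m := by
    have hlim : Tendsto (fun t : ℝ ↦ t * (a - c)) (𝓝[>] 0) (𝓝 (0 * (a - c))) :=
      (tendsto_nhdsWithin_of_tendsto_nhds tendsto_id).mul_const _
    exact hlim.eventually_lt_const (by simpa using hmm')
  filter_upwards [hsmall, self_mem_nhdsWithin] with t ht (ht0 : 0 < t) x hx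
  rcases le_total (h x) a with hxa | hxa
  · have : t * c ≤ t * h x := by gcongr; exact hc (mem_image_of_mem h hx)
    linarith [hm' x ⟨hx, hxa⟩]
  · have : t * a ≤ t * h x := by gcongr
    linarith [hm x hx]

variable {f g' : α → ℝ} {g : ℝ → α → ℝ}

theorem eventually_le_slope_sInf_image {b c : ℝ} (hK : IsCompact K) (hKne : K.Nonempty)
    (hf : ContinuousOn f K) (hg' : ContinuousOn g' K)
    (hslope : TendstoUniformlyOn (fun t x ↦ (g t x - f x) / t) g' (𝓝[>] 0) K)
    (hc : ∀ x ∈ K, IsMinOn f K x → c ≤ g' x) (hbc : b < c) :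
    ∀ᶠ t in 𝓝[>] (0 : ℝ), b ≤ (sInf (g t '' K) - sInf (f '' K)) / t := by
  obtain ⟨a, hba, hac⟩ := exists_between hbc
  have hle : ∀ x ∈ K, sInf (f '' K) ≤ f x := fun x hx ↦
    csInf_le (hK.bddBelow_image hf) (mem_image_of_mem f hx)
  have hlt : ∀ x ∈ K, f x = sInf (f '' K) → a < g' x := fun x hx hfx ↦
    hac.trans_le <| hc x hx <| isMinOn_iff.2 fun y hy ↦ hfx.trans_le (hle y hy)
  filter_upwards [eventually_forall_add_mul_le hK hf hg' hle hlt,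
    Metric.tendstoUniformlyOn_iff.1 hslope (a - b) (sub_pos.2 hba), self_mem_nhdsWithin]
    with t hlin hunif (ht : 0 < t)
  rw [le_div_iff₀ ht, le_sub_iff_add_le]
  refine le_csInf (hKne.image _) (forall_mem_image.2 fun x hx ↦ ?_)
  have hdiff : g' x - (a - b) ≤ (g t x - f x) / t := by
    have := (abs_lt.1 (Real.dist_eq _ _ ▸ hunif x hx)).2
    linarith
  rw [le_div_iff₀ ht] at hdiff
  linarith [hlin x hx]

theorem tendsto_slope_sInf_image_of_tendstoUniformlyOn (hK : IsCompact K) (hKne : K.Nonempty)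
    (hf : ContinuousOn f K) (hg : ∀ t, ContinuousOn (g t) K)
    (hslope : TendstoUniformlyOn (fun t x ↦ (g t x - f x) / t) g' (𝓝[>] 0) K) :
    Tendsto (fun t ↦ (sInf (g t '' K) - sInf (f '' K)) / t) (𝓝[>] 0)
      (𝓝 (sInf (g' '' {x ∈ K | IsMinOn f K x}))) := by
  have hg' : ContinuousOn g' K :=
    hslope.continuousOn (Frequently.of_forall fun t ↦ ((hg t).sub hf).div_const t)
  have hne : {x ∈ K | IsMinOn f K x}.Nonempty := hK.exists_isMinOn hKne hf
  have hbdd : BddBelow (g' '' {x ∈ K | IsMinOn f K x}) :=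
    (hK.bddBelow_image hg').mono (image_mono (sep_subset _ _))
  refine tendsto_order.2 ⟨fun a ha ↦ ?_, fun b hb ↦ ?_⟩
  · obtain ⟨b, hab, hb⟩ := exists_between ha
    filter_upwards [eventually_le_slope_sInf_image hK hKne hf hg' hslope
      (fun x hxK hx ↦ csInf_le hbdd (mem_image_of_mem g' ⟨hxK, hx⟩)) hb] with t ht
    exact hab.trans_le ht
  · obtain ⟨_, ⟨x, ⟨hxK, hx⟩, rfl⟩, hxb⟩ := exists_lt_of_csInf_lt (hne.image g') hb
    exact eventually_slope_sInf_image_lt (fun t ↦ hK.bddBelow_image (hg t)) hxK hx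
      (hslope.tendsto_at hxK) hxb

end Danskin

section WeightedSum

theorem eventually_smul_le_nhdsWithin_Ici {ι : Type*} [Finite ι] {w : ι → ℝ} {θ : ℝ}
    (hw : 0 ≤ w) (hθ : θ < 1) :
    ∀ᶠ w' in 𝓝[Ici 0] w, θ • w ≤ w' := by
  simp only [Pi.le_def, eventually_all]
  intro i
  rcases (hw i).eq_or_lt with hi | hi
  · filter_upwards [self_mem_nhdsWithin] with w' hw'
    simpa [← hi] using hw' i
  · have : Tendsto (fun w' : ι → ℝ ↦ w' i) (𝓝[Ici 0] w) (𝓝 (w i)) :=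
      (continuous_apply i).continuousWithinAt
    refine (this.eventually_const_lt ?_).mono fun _ ↦ le_of_lt
    simpa using mul_lt_of_lt_one_left hi hθ

variable {ι X : Type*} [Fintype ι] {S : Set X} {h : ι → X → ℝ}

theorem bddBelow_image_sum_mul {w : ι → ℝ} (hw : 0 ≤ w) (hh : ∀ i, BddBelow (h i '' S)) :
    BddBelow ((fun y ↦ ∑ i, w i * h i y) '' S) := by
  choose c hc using hh
  refine ⟨∑ i, w i * c i, forall_mem_image.2 fun y hy ↦ Finset.sum_le_sum fun i _ ↦ ?_⟩
  exact mul_le_mul_of_nonneg_left (hc i (mem_image_of_mem _ hy)) (hw i)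

theorem continuousOn_sInf_image_sum_mul_of_nonneg (hS : S.Nonempty)
    (hh : ∀ i, ∀ y ∈ S, 0 ≤ h i y) :
    ContinuousOn (fun w : ι → ℝ ↦ sInf ((fun y ↦ ∑ i, w i * h i y) '' S)) (Ici 0) := by
  have hbdd (w : ι → ℝ) (hw : 0 ≤ w) : BddBelow ((fun y ↦ ∑ i, w i * h i y) '' S) :=
    bddBelow_image_sum_mul hw fun i ↦ ⟨0, forall_mem_image.2 (hh i)⟩
  intro w hw
  refine tendsto_order.2 ⟨fun a ha ↦ ?_, fun b hb ↦ ?_⟩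
  -- Weights near `w` dominate `θ • w` for every `θ < 1`, even where coordinates of `w` vanish.
  · obtain ⟨θ, haθ, hθ0, hθ1⟩ :
        ∃ θ : ℝ, a < θ * sInf ((fun y ↦ ∑ i, w i * h i y) '' S) ∧ 0 ≤ θ ∧ θ < 1 := by
      have hlim : Tendsto (fun θ : ℝ ↦ θ * sInf ((fun y ↦ ∑ i, w i * h i y) '' S)) (𝓝[<] 1)
          (𝓝 (1 * sInf ((fun y ↦ ∑ i, w i * h i y) '' S))) :=
        (tendsto_nhdsWithin_of_tendsto_nhds tendsto_id).mul_const _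
      rw [one_mul] at hlim
      exact ((hlim.eventually_const_lt ha).and (Ico_mem_nhdsLT zero_lt_one)).exists
    filter_upwards [eventually_smul_le_nhdsWithin_Ici hw hθ1] with w' hw'
    refine haθ.trans_le (le_csInf (hS.image _) (forall_mem_image.2 fun y hy ↦ ?_))
    calc θ * sInf ((fun y ↦ ∑ i, w i * h i y) '' S)
        ≤ θ * ∑ i, w i * h i y := by
          gcongr; exact csInf_le (hbdd w hw) (mem_image_of_mem _ hy)
      _ = ∑ i, (θ • w) i * h i y := by simp [Finset.mul_sum, mul_assoc]
      _ ≤ ∑ i, w' i * h i y := by gcongr with i; exacts [hh i y hy, hw' i]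
  · obtain ⟨_, ⟨y, hy, rfl⟩, hyb⟩ := exists_lt_of_csInf_lt (hS.image _) hb
    have hcont : Continuous fun w' : ι → ℝ ↦ ∑ i, w' i * h i y := by fun_prop
    filter_upwards [hcont.continuousWithinAt.eventually_lt_const hyb, self_mem_nhdsWithin]
      with w' hw'b hw'
    exact (csInf_le (hbdd w' hw') (mem_image_of_mem _ hy)).trans_lt hw'b

theorem continuousOn_sInf_image_sum_mul (hS : S.Nonempty) (hh : ∀ i, BddBelow (h i '' S)) :
    ContinuousOn (fun w : ι → ℝ ↦ sInf ((fun y ↦ ∑ i, w i * h i y) '' S)) (Ici 0) := by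
  choose c hc using hh
  have hshift := continuousOn_sInf_image_sum_mul_of_nonneg (h := fun i y ↦ h i y - c i) hS
    fun i y hy ↦ sub_nonneg.2 (hc i (mem_image_of_mem _ hy))
  have hlin : Continuous fun w : ι → ℝ ↦ ∑ i, w i * c i := by fun_prop
  refine (hshift.add hlin.continuousOn).congr fun w hw ↦ ?_
  have himg : (fun y ↦ ∑ i, w i * h i y) '' S
      = (fun r ↦ r + ∑ i, w i * c i) '' ((fun y ↦ ∑ i, w i * (h i y - c i)) '' S) := by
    simp [image_image, mul_sub]
  have hbdd := bddBelow_image_sum_mul (h := fun i y ↦ h i y - c i) hw fun i ↦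
    ⟨0, forall_mem_image.2 fun y hy ↦ sub_nonneg.2 (hc i (mem_image_of_mem _ hy))⟩
  rw [himg]
  exact ((OrderIso.addRight (∑ i, w i * c i)).map_csInf' (hS.image _) hbdd).symm

theorem convexOn_sum_mul {E : Type*} [AddCommGroup E] [Module ℝ E] {C : Set E}
    {F : ι → E → ℝ} {w : ι → ℝ} (hC : Convex ℝ C) (hF : ∀ i, ConvexOn ℝ C (F i)) (hw : 0 ≤ w) :
    ConvexOn ℝ C fun y ↦ ∑ i, w i * F i y := by
  refine ⟨hC, fun y hy z hz a b ha hb hab ↦ ?_⟩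
  calc ∑ i, w i * F i (a • y + b • z) ≤ ∑ i, w i * (a * F i y + b * F i z) := by
        gcongr with i
        exacts [hw i, (hF i).2 hy hz ha hb hab]
    _ = a • (∑ i, w i * F i y) + b • ∑ i, w i * F i z := by
        simp only [smul_eq_mul, Finset.mul_sum, ← Finset.sum_add_distrib]
        exact Finset.sum_congr rfl fun i _ ↦ by ring

theorem tendstoUniformlyOn_sum_mul_stdSimplex {β : Type*} {l : Filter β}
    {a : ι → β → ℝ} {c : ι → ℝ} (ha : ∀ i, Tendsto (a i) l (𝓝 (c i))) :
    TendstoUniformlyOn (fun t w ↦ ∑ i, w i * a i t) (fun w ↦ ∑ i, w i * c i) l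
      (stdSimplex ℝ ι) := by
  refine Metric.tendstoUniformlyOn_iff.2 fun ε hε ↦ ?_
  have hclose : ∀ᶠ t in l, ∀ i, dist (c i) (a i t) < ε / 2 :=
    eventually_all.2 fun i ↦ by
      simpa only [dist_comm] using Metric.tendsto_nhds.1 (ha i) (ε / 2) (half_pos hε)
  filter_upwards [hclose] with t ht w hw
  calc dist (∑ i, w i * c i) (∑ i, w i * a i t)
      ≤ ∑ i, dist (w i * c i) (w i * a i t) := dist_sum_sum_le _ _ _
    _ = ∑ i, w i * dist (c i) (a i t) := by
      simp only [Real.dist_eq, ← mul_sub, abs_mul, abs_of_nonneg (hw.1 _)]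
    _ ≤ ∑ i, w i * (ε / 2) := by
      gcongr with i
      exacts [hw.1 i, (ht i).le]
    _ = ε / 2 := by rw [← Finset.sum_mul, hw.2, one_mul]
    _ < ε := half_lt_self hε

end WeightedSum

section Minimax

theorem isLUB_image_lowerClosure_iff {α β : Type*} [Preorder α] [Preorder β] {f : α → β}
    {s : Set α} {b : β} (hf : Monotone f) :
    IsLUB (f '' (lowerClosure s : Set α)) b ↔ IsLUB (f '' s) b := by
  suffices upperBounds (f '' (lowerClosure s : Set α)) = upperBounds (f '' s) by
    simp only [IsLUB, this]
  refine (upperBounds_mono_set (image_mono subset_lowerClosure)).antisymm fun c hc ↦ ?_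
  rintro _ ⟨v, ⟨u, hu, hvu⟩, rfl⟩
  exact (hf hvu).trans (hc (mem_image_of_mem f hu))

theorem convex_lowerClosure_image {ι E : Type*} [AddCommGroup E] [Module ℝ E] {S : Set E}
    {g : ι → E → ℝ} (hS : Convex ℝ S) (hg : ∀ i, ConcaveOn ℝ S (g i)) :
    Convex ℝ (lowerClosure ((fun y i ↦ g i y) '' S) : Set (ι → ℝ)) := by
  rintro v ⟨_, ⟨y, hy, rfl⟩, hvy⟩ v' ⟨_, ⟨y', hy', rfl⟩, hvy'⟩ a b ha hb hab
  refine ⟨_, mem_image_of_mem _ (hS hy hy' ha hb hab), fun i ↦ ?_⟩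
  calc a * v i + b * v' i ≤ a * g i y + b * g i y' := by
        gcongr
        exacts [hvy i, hvy' i]
    _ ≤ g i (a • y + b • y') := (hg i).2 hy hy' ha hb hab

variable {ι : Type*} [Fintype ι] [Nonempty ι] {D : (ι → ℝ) → ℝ}

theorem isGLB_image_stdSimplex_sum_mul (v : ι → ℝ) :
    IsGLB ((fun w ↦ ∑ i, w i * v i) '' stdSimplex ℝ ι) (⨅ i, v i) := by
  classical
  constructor
  · refine forall_mem_image.2 fun w hw ↦ ?_
    calc ⨅ i, v i = ∑ i, w i * ⨅ j, v j := by rw [← Finset.sum_mul, hw.2, one_mul]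
      _ ≤ ∑ i, w i * v i := by
        gcongr with i
        exacts [hw.1 i, ciInf_le (finite_range v).bddBelow i]
  · intro b hb
    exact le_ciInf fun i ↦ by
      simpa [Pi.single_apply] using hb (mem_image_of_mem _ (single_mem_stdSimplex ℝ i))

theorem isLUB_image_iInf_of_isLUB_image_sum_mul {Y : Set (ι → ℝ)} (hY : Convex ℝ Y)
    (hYne : Y.Nonempty)
    (hD : ∀ w ∈ stdSimplex ℝ ι, IsLUB ((fun v ↦ ∑ i, w i * v i) '' Y) (D w)) :
    IsLUB ((fun v ↦ ⨅ i, v i) '' Y) (sInf (D '' stdSimplex ℝ ι)) := by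
  classical
  obtain ⟨v₀, hv₀⟩ := hYne
  have hne : (stdSimplex ℝ ι).Nonempty :=
    ⟨_, single_mem_stdSimplex ℝ (Classical.arbitrary ι)⟩
  have hweak : ∀ v ∈ Y, ∀ w ∈ stdSimplex ℝ ι, ⨅ i, v i ≤ D w := fun v hv w hw ↦
    ((isGLB_image_stdSimplex_sum_mul v).1 (mem_image_of_mem _ hw)).trans
      ((hD w hw).1 (mem_image_of_mem _ hv))
  have hsup : IsLUB ((fun v ↦ ⨅ i, v i) '' Y) (sSup ((fun v ↦ ⨅ i, v i) '' Y)) :=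
    isLUB_csSup ⟨_, mem_image_of_mem _ hv₀⟩
      ⟨D hne.some, forall_mem_image.2 fun v hv ↦ hweak v hv _ hne.some_mem⟩
  have hinf : IsGLB (D '' stdSimplex ℝ ι) (sInf (D '' stdSimplex ℝ ι)) :=
    isGLB_csInf (hne.image _) ⟨⨅ i, v₀ i, forall_mem_image.2 (hweak v₀ hv₀)⟩
  suffices sInf (D '' stdSimplex ℝ ι) = sSup ((fun v ↦ ⨅ i, v i) '' Y) from this ▸ hsup
  refine Sion.minimax (f := fun w v : ι → ℝ ↦ ∑ i, w i * v i) hne (isCompact_stdSimplex ℝ ι)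
    (fun v _ ↦ ?_) (fun v _ ↦ ?_) hY (fun w _ ↦ ?_) (fun w _ ↦ ?_) (convex_stdSimplex ℝ ι)
    D hD _ hinf _ (fun v _ ↦ isGLB_image_stdSimplex_sum_mul v) _ hsup
  · exact ContinuousOn.lowerSemicontinuousOn (by fun_prop)
  · exact (((dotProductBilin ℝ ℝ).flip v).convexOn (convex_stdSimplex ℝ ι)).quasiconvexOn
  · exact ContinuousOn.upperSemicontinuousOn (by fun_prop)
  · exact ((dotProductBilin ℝ ℝ w).concaveOn hY).quasiconcaveOn

theorem isLUB_image_iInf_of_concaveOn {E : Type*} [AddCommGroup E] [Module ℝ E] {S : Set E}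
    {g : ι → E → ℝ} (hS : S.Nonempty) (hg : ∀ i, ConcaveOn ℝ S (g i))
    (hD : ∀ w ∈ stdSimplex ℝ ι, IsLUB ((fun y ↦ ∑ i, w i * g i y) '' S) (D w)) :
    IsLUB ((fun y ↦ ⨅ i, g i y) '' S) (sInf (D '' stdSimplex ℝ ι)) := by
  have hmono_sum : ∀ w ∈ stdSimplex ℝ ι, Monotone fun v : ι → ℝ ↦ ∑ i, w i * v i :=
    fun w hw v v' hv ↦ Finset.sum_le_sum fun i _ ↦ mul_le_mul_of_nonneg_left (hv i) (hw.1 i)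
  have hmono_iInf : Monotone fun v : ι → ℝ ↦ ⨅ i, v i :=
    fun v v' hv ↦ ciInf_mono (finite_range v).bddBelow hv
  -- The image of `S` need not be convex, but its lower closure is and has the same suprema.
  have hlower := isLUB_image_iInf_of_isLUB_image_sum_mul (D := D)
    (convex_lowerClosure_image (hg (Classical.arbitrary ι)).1 hg)
    ((hS.image _).mono subset_lowerClosure) fun w hw ↦
      (isLUB_image_lowerClosure_iff (hmono_sum w hw)).2 (by simpa only [image_image] using hD w hw)
  simpa only [image_image] using (isLUB_image_lowerClosure_iff hmono_iInf).1 hlower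

end Minimax

section Dual

variable {E ι : Type*} [NormedAddCommGroup E] [Fintype ι] {S : Set E} {ℓ : ℝ} {F : ι → E → ℝ}
  {x : E} {w : ι → ℝ}

/-- The objective `y ↦ φ y + (ℓ/2)‖x - y‖²` of the proximal problem of `φ` at `x`. -/
noncomputable def proxObj (ℓ : ℝ) (φ : E → ℝ) (x y : E) : ℝ :=
  φ y + ℓ / 2 * ‖x - y‖ ^ 2

/-- The Moreau envelope of `φ` constrained to `S`: the optimal value of the proximal problem at
`x`, with the junk value `0` if `S` is empty or the problem is unbounded below. -/
noncomputable def moreauEnv (ℓ : ℝ) (S : Set E) (φ : E → ℝ) (x : E) : ℝ :=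
  sInf (proxObj ℓ φ x '' S)

/-- The regularized merit function `u_ℓ` in a normed group, for a finite family of objectives;
`meritU` is the case of `ℝⁿ` and `Fin m`. -/
noncomputable def regMerit (ℓ : ℝ) (S : Set E) (F : ι → E → ℝ) (x : E) : ℝ :=
  sSup ((fun y ↦ ⨅ i, (F i x - F i y - ℓ / 2 * ‖x - y‖ ^ 2)) '' S)

/-- The dual objective of the max-min problem defining `regMerit`, as a function of the weights
`w`; `dualObjU` is the case of `ℝⁿ` and `Fin m`. -/
noncomputable def regDual (ℓ : ℝ) (S : Set E) (F : ι → E → ℝ) (x : E) (w : ι → ℝ) : ℝ :=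
  (∑ i, w i * F i x) - moreauEnv ℓ S (fun y ↦ ∑ i, w i * F i y) x

theorem sum_mul_proxObj (hw : w ∈ stdSimplex ℝ ι) (y : E) :
    ∑ i, w i * proxObj ℓ (F i) x y = proxObj ℓ (fun y ↦ ∑ i, w i * F i y) x y := by
  simp only [proxObj, mul_add, Finset.sum_add_distrib, ← Finset.sum_mul, hw.2, one_mul]

theorem regDual_eq_sub_sInf_image (hw : w ∈ stdSimplex ℝ ι) :
    regDual ℓ S F x w =
      (∑ i, w i * F i x) - sInf ((fun y ↦ ∑ i, w i * proxObj ℓ (F i) x y) '' S) := by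
  simp only [sum_mul_proxObj hw, regDual, moreauEnv]

theorem continuousOn_regDual (hS : S.Nonempty) (hbdd : ∀ i, BddBelow (proxObj ℓ (F i) x '' S)) :
    ContinuousOn (regDual ℓ S F x) (stdSimplex ℝ ι) := by
  have hlin : Continuous fun w : ι → ℝ ↦ ∑ i, w i * F i x := by fun_prop
  have hinf := (continuousOn_sInf_image_sum_mul hS hbdd).mono fun w (hw : w ∈ stdSimplex ℝ ι) ↦ hw.1
  exact (hlin.continuousOn.sub hinf).congr fun w hw ↦ regDual_eq_sub_sInf_image hw

theorem isLUB_image_sum_mul_regDual (hS : S.Nonempty)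
    (hbdd : ∀ i, BddBelow (proxObj ℓ (F i) x '' S)) (hw : w ∈ stdSimplex ℝ ι) :
    IsLUB ((fun y ↦ ∑ i, w i * (F i x - proxObj ℓ (F i) x y)) '' S) (regDual ℓ S F x w) := by
  have hglb := isGLB_csInf (hS.image _) (bddBelow_image_sum_mul hw.1 hbdd)
  rw [regDual_eq_sub_sInf_image hw]
  simp only [mul_sub, Finset.sum_sub_distrib]
  refine ⟨forall_mem_image.2 fun y hy ↦ sub_le_sub_left (hglb.1 (mem_image_of_mem _ hy)) _,
    fun b hb ↦ sub_le_comm.1 (hglb.2 (forall_mem_image.2 fun y hy ↦ ?_))⟩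
  exact sub_le_comm.1 (hb (mem_image_of_mem _ hy))

end Dual

section Prox

theorem add_sq_norm_sub_le_of_isMinOn_of_strongConvexOn {E : Type*} [NormedAddCommGroup E]
    [NormedSpace ℝ E] {S : Set E} {ℓ : ℝ} {f : E → ℝ} {q y : E} (hf : StrongConvexOn S ℓ f)
    (hq : q ∈ S) (hmin : IsMinOn f S q) (hy : y ∈ S) :
    f q + ℓ / 2 * ‖y - q‖ ^ 2 ≤ f y := by
  have hseg : ∀ᶠ s in 𝓝[>] (0 : ℝ), f q + (1 - s) * (ℓ / 2 * ‖y - q‖ ^ 2) ≤ f y := by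
    filter_upwards [Ioo_mem_nhdsGT zero_lt_one] with s ⟨hs0, hs1⟩
    have hconv := hf.2 hy hq hs0.le (sub_nonneg.2 hs1.le) (add_sub_cancel s 1)
    have hle : f q ≤ f (s • y + (1 - s) • q) :=
      hmin (hf.1 hy hq hs0.le (sub_nonneg.2 hs1.le) (add_sub_cancel s 1))
    simp only [smul_eq_mul] at hconv
    refine le_of_mul_le_mul_left ?_ hs0
    linarith
  have hlim : Tendsto (fun s : ℝ ↦ f q + (1 - s) * (ℓ / 2 * ‖y - q‖ ^ 2)) (𝓝[>] 0)
      (𝓝 (f q + (1 - 0) * (ℓ / 2 * ‖y - q‖ ^ 2))) :=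
    Continuous.continuousWithinAt (by fun_prop)
  simpa using le_of_tendsto hlim hseg

variable {E : Type*} [NormedAddCommGroup E] [InnerProductSpace ℝ E] {S : Set E} {ℓ : ℝ}
  {φ : E → ℝ} {x q : E}

theorem strongConvexOn_proxObj (hφ : ConvexOn ℝ S φ) : StrongConvexOn S ℓ (proxObj ℓ φ x) := by
  rw [strongConvexOn_iff_convex]
  have hlin : ConvexOn ℝ S (-(ℓ • innerₗ E x)) := LinearMap.convexOn _ hφ.1
  refine ((hφ.add hlin).add_const (ℓ / 2 * ‖x‖ ^ 2)).congr fun y _ ↦ ?_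
  calc φ y + -(ℓ * ⟪x, y⟫) + ℓ / 2 * ‖x‖ ^ 2
      = φ y + ℓ / 2 * (‖x‖ ^ 2 - 2 * ⟪x, y⟫ + ‖y‖ ^ 2) - ℓ / 2 * ‖y‖ ^ 2 := by ring
    _ = proxObj ℓ φ x y - ℓ / 2 * ‖y‖ ^ 2 := by rw [proxObj, norm_sub_sq_real]

theorem proxObj_add_left (d y : E) : proxObj ℓ φ (x + d) y
    = proxObj ℓ φ x y + ℓ * ⟪x - y, d⟫ + ℓ / 2 * ‖d‖ ^ 2 := by
  have := norm_add_sq_real (x - y) d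
  rw [sub_add_eq_add_sub] at this
  simp only [proxObj, this]
  ring

theorem proxObj_add_inner_le (hφ : ConvexOn ℝ S φ) (hℓ : 0 ≤ ℓ) (hq : q ∈ S)
    (hmin : IsMinOn (proxObj ℓ φ x) S q) (d : E) {y : E} (hy : y ∈ S) :
    proxObj ℓ φ x q + ℓ * ⟪x - q, d⟫ ≤ proxObj ℓ φ (x + d) y := by
  have hstrong := add_sq_norm_sub_le_of_isMinOn_of_strongConvexOn
    (strongConvexOn_proxObj hφ) hq hmin hy
  have hsq : 0 ≤ ℓ / 2 * ‖d - (y - q)‖ ^ 2 := by positivity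
  rw [norm_sub_sq_real] at hsq
  have hinner : ⟪x - y, d⟫ = ⟪x - q, d⟫ - ⟪d, y - q⟫ := by
    rw [real_inner_comm (y - q), ← inner_sub_left, sub_sub_sub_cancel_right]
  rw [proxObj_add_left, hinner]
  linarith

theorem bddBelow_image_proxObj (hφ : ConvexOn ℝ S φ) (hℓ : 0 ≤ ℓ) (hq : q ∈ S)
    (hmin : IsMinOn (proxObj ℓ φ x) S q) (x' : E) : BddBelow (proxObj ℓ φ x' '' S) :=
  ⟨_, forall_mem_image.2 fun y hy ↦ by
    simpa using proxObj_add_inner_le hφ hℓ hq hmin (x' - x) hy⟩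

theorem abs_moreauEnv_add_sub_le (hφ : ConvexOn ℝ S φ) (hℓ : 0 ≤ ℓ) (hq : q ∈ S)
    (hmin : IsMinOn (proxObj ℓ φ x) S q) (d : E) :
    |moreauEnv ℓ S φ (x + d) - moreauEnv ℓ S φ x - ℓ * ⟪x - q, d⟫| ≤ ℓ / 2 * ‖d‖ ^ 2 := by
  have hx : moreauEnv ℓ S φ x = proxObj ℓ φ x q :=
    (hmin.isGLB hq).csInf_eq ⟨_, mem_image_of_mem _ hq⟩
  have hlower : proxObj ℓ φ x q + ℓ * ⟪x - q, d⟫ ≤ moreauEnv ℓ S φ (x + d) :=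
    le_csInf ⟨_, mem_image_of_mem _ hq⟩
      (forall_mem_image.2 fun y hy ↦ proxObj_add_inner_le hφ hℓ hq hmin d hy)
  have hupper : moreauEnv ℓ S φ (x + d) ≤ proxObj ℓ φ (x + d) q :=
    csInf_le (bddBelow_image_proxObj hφ hℓ hq hmin _) (mem_image_of_mem _ hq)
  rw [proxObj_add_left] at hupper
  have : 0 ≤ ℓ / 2 * ‖d‖ ^ 2 := by positivity
  exact abs_le.2 ⟨by linarith, by linarith⟩

theorem tendstoUniformlyOn_slope_moreauEnv {κ : Type*} {K : Set κ} {φ : κ → E → ℝ} {p : κ → E}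
    (hφ : ∀ k ∈ K, ConvexOn ℝ S (φ k)) (hℓ : 0 ≤ ℓ) (hpS : ∀ k ∈ K, p k ∈ S)
    (hp : ∀ k ∈ K, IsMinOn (proxObj ℓ (φ k) x) S (p k)) (d : E) :
    TendstoUniformlyOn
      (fun t k ↦ (moreauEnv ℓ S (φ k) (x + t • d) - moreauEnv ℓ S (φ k) x) / t)
      (fun k ↦ ℓ * ⟪x - p k, d⟫) (𝓝[>] 0) K := by
  have hlim : Tendsto (fun t : ℝ ↦ t * (ℓ / 2 * ‖d‖ ^ 2)) (𝓝[>] 0)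
      (𝓝 (0 * (ℓ / 2 * ‖d‖ ^ 2))) :=
    Continuous.continuousWithinAt (by fun_prop)
  rw [zero_mul] at hlim
  refine Metric.tendstoUniformlyOn_iff.2 fun ε hε ↦ ?_
  filter_upwards [hlim.eventually_lt_const hε, self_mem_nhdsWithin] with t htε (ht : 0 < t) k hk
  refine lt_of_le_of_lt ?_ htε
  have hbound := abs_moreauEnv_add_sub_le (hφ k hk) hℓ (hpS k hk) (hp k hk) (t • d)
  rw [inner_smul_right, norm_smul, Real.norm_of_nonneg ht.le] at hbound
  rw [dist_comm, Real.dist_eq, div_sub' ht.ne', abs_div, abs_of_pos ht, div_le_iff₀ ht]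
  rw [mul_left_comm ℓ t] at hbound
  exact hbound.trans_eq (by ring)

end Prox

section Merit

variable {E ι : Type*} [NormedAddCommGroup E] [InnerProductSpace ℝ E] [Fintype ι] {S : Set E}
  {ℓ : ℝ} {F : ι → E → ℝ} {x : E}

theorem regMerit_eq_sInf_image_regDual [Nonempty ι] (hS : S.Nonempty)
    (hF : ∀ i, ConvexOn ℝ S (F i)) (hℓ : 0 ≤ ℓ)
    (hbdd : ∀ i, BddBelow (proxObj ℓ (F i) x '' S)) :
    regMerit ℓ S F x = sInf (regDual ℓ S F x '' stdSimplex ℝ ι) := by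
  have hconc (i : ι) : ConcaveOn ℝ S fun y ↦ F i x - proxObj ℓ (F i) x y :=
    (concaveOn_const (F i x) (hF i).1).sub
      ((strongConvexOn_proxObj (hF i)).convexOn fun r ↦ by positivity)
  have hlub := isLUB_image_iInf_of_concaveOn hS hconc fun w hw ↦
    isLUB_image_sum_mul_regDual hS hbdd hw
  simpa only [regMerit, proxObj, sub_sub] using hlub.csSup_eq (hS.image _)

variable {p : (ι → ℝ) → E} {d : E} {dF : ι → ℝ}

theorem tendstoUniformlyOn_slope_regDual (hS : Convex ℝ S) (hF : ∀ i, ConvexOn ℝ S (F i))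
    (hℓ : 0 ≤ ℓ) (hpS : ∀ w ∈ stdSimplex ℝ ι, p w ∈ S)
    (hp : ∀ w ∈ stdSimplex ℝ ι, IsMinOn (proxObj ℓ (fun y ↦ ∑ i, w i * F i y) x) S (p w))
    (hdF : ∀ i, Tendsto (fun t : ℝ ↦ (F i (x + t • d) - F i x) / t) (𝓝[>] 0) (𝓝 (dF i))) :
    TendstoUniformlyOn (fun t w ↦ (regDual ℓ S F (x + t • d) w - regDual ℓ S F x w) / t)
      (fun w ↦ (∑ i, w i * dF i) - ℓ * ⟪x - p w, d⟫) (𝓝[>] 0) (stdSimplex ℝ ι) := by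
  have henv := tendstoUniformlyOn_slope_moreauEnv
    (fun w hw ↦ convexOn_sum_mul hS hF hw.1) hℓ hpS hp d
  refine ((tendstoUniformlyOn_sum_mul_stdSimplex hdF).sub henv).congr <|
    Eventually.of_forall fun t w _ ↦ ?_
  simp only [Pi.sub_apply, regDual, mul_div_assoc', ← Finset.sum_div, mul_sub,
    Finset.sum_sub_distrib]
  ring

theorem meritU_hasDirDeriv_general [Nonempty ι] (hF : ∀ i, ConvexOn ℝ S (F i)) (hℓ : 0 ≤ ℓ)
    (hpS : ∀ w ∈ stdSimplex ℝ ι, p w ∈ S)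
    (hp : ∀ w ∈ stdSimplex ℝ ι, IsMinOn (proxObj ℓ (fun y ↦ ∑ i, w i * F i y) x) S (p w))
    (hdF : ∀ i, Tendsto (fun t : ℝ ↦ (F i (x + t • d) - F i x) / t) (𝓝[>] 0) (𝓝 (dF i))) :
    Tendsto (fun t : ℝ ↦ (regMerit ℓ S F (x + t • d) - regMerit ℓ S F x) / t) (𝓝[>] 0)
      (𝓝 (sInf ((fun w ↦ (∑ i, w i * dF i) - ℓ * ⟪x - p w, d⟫) ''
        {w ∈ stdSimplex ℝ ι | IsMinOn (regDual ℓ S F x) (stdSimplex ℝ ι) w}))) := by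
  classical
  have hvertex (i : ι) : Pi.single i 1 ∈ stdSimplex ℝ ι := single_mem_stdSimplex ℝ i
  have hΔ : (stdSimplex ℝ ι).Nonempty := ⟨_, hvertex (Classical.arbitrary ι)⟩
  have hS : S.Nonempty := ⟨_, hpS _ hΔ.some_mem⟩
  have hbdd (x' : E) (i : ι) : BddBelow (proxObj ℓ (F i) x' '' S) :=
    bddBelow_image_proxObj (hF i) hℓ (hpS _ (hvertex i))
      (by simpa [Pi.single_apply] using hp _ (hvertex i)) x'
  simp only [regMerit_eq_sInf_image_regDual hS hF hℓ (hbdd _)]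
  exact tendsto_slope_sInf_image_of_tendstoUniformlyOn (isCompact_stdSimplex ℝ ι) hΔ
    (continuousOn_regDual hS (hbdd x)) (fun t ↦ continuousOn_regDual hS (hbdd (x + t • d)))
    (tendstoUniformlyOn_slope_regDual (hF (Classical.arbitrary ι)).1 hF hℓ hpS hp hdF)

end Merit

end

/-- directional differentiability of `u_ℓ`:
`u_ℓ′(x; z - x) = inf_{λ ∈ Λ(x)} { Σ_i λ_i F_i′(x; z - x) - ℓ ⟨x - p(λ), z - x⟩ }`,
where `Λ(x)` is the set of minimizers of the dual objective over the standard simplex and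
`p(λ)` is the unique minimizer over `S` of `y ↦ Σ_i λ_i F_i(y) + (ℓ/2)‖x - y‖²`. -/
theorem meritU_hasDirDeriv {n m : ℕ} (hm : 0 < m)
    (S : Set (EuclideanSpace ℝ (Fin n))) (hS : S.Nonempty)
    (hSclosed : IsClosed S) (hSconv : Convex ℝ S)
    (F : Fin m → EuclideanSpace ℝ (Fin n) → ℝ)
    (hFconv : ∀ i, ConvexOn ℝ Set.univ (F i))
    (ℓ : ℝ) (hℓ : 0 < ℓ)
    (x : EuclideanSpace ℝ (Fin n)) (hx : x ∈ S)
    (p : (Fin m → ℝ) → EuclideanSpace ℝ (Fin n))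
    (hpmem : ∀ lam ∈ stdSimplex ℝ (Fin m), p lam ∈ S)
    (hpmin : ∀ lam ∈ stdSimplex ℝ (Fin m), ∀ y ∈ S,
      (∑ i, lam i * F i (p lam)) + ℓ / 2 * ‖x - p lam‖ ^ 2 ≤
        (∑ i, lam i * F i y) + ℓ / 2 * ‖x - y‖ ^ 2)
    (dF : Fin m → EuclideanSpace ℝ (Fin n) → ℝ)
    (hdF : ∀ i, ∀ z ∈ S, HasDirDeriv (F i) x (z - x) (dF i z)) :
    ∀ z ∈ S, HasDirDeriv (meritU ℓ S F) x (z - x)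
      (sInf {w : ℝ | ∃ lam, (lam ∈ stdSimplex ℝ (Fin m) ∧
          ∀ lam' ∈ stdSimplex ℝ (Fin m), dualObjU ℓ S F x lam ≤ dualObjU ℓ S F x lam') ∧
        w = (∑ i, lam i * dF i z) - ℓ * ⟪x - p lam, z - x⟫}) := by
  intro z hz
  have : Nonempty (Fin m) := ⟨⟨0, hm⟩⟩
  have hderiv := meritU_hasDirDeriv_general
    (fun i ↦ (hFconv i).subset (Set.subset_univ S) hSconv) hℓ.le hpmem
    (fun lam hlam ↦ isMinOn_iff.2 (hpmin lam hlam)) (fun i ↦ hdF i z hz)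
  simpa only [Set.image, Set.mem_ofPred_eq, isMinOn_iff, eq_comm] using! hderiv
end

section
/- Suppose each F_i is strictly convex and let ℓ > 0. If x ∈ S satisfies u_ℓ′(x; z − x) ≥ 0 for all z ∈ S (these directional derivatives exist), then x is Pareto optimal for min_{x∈S} F(x). -/
/-!
The maximand `p ↦ min_i (F i x - F i p - (ℓ/2)‖x - p‖²)` vanishes at `p = x` and is `ℓ`-strongly
concave, so it attains its maximum `u_ℓ(x)` over `S` at some `y`, with quadratic growth around `y`.

If `y = x`, the quadratic growth cancels the regularization and leaves
`min_i (F i x - F i p) ≤ 0` for all `p ∈ S`; strict convexity, applied at the midpoint of `x` and a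
dominating point, upgrades this weak Pareto optimality to Pareto optimality.

If `y ≠ x`, the quadratic growth absorbs the effect of the moving maximizer and gives
`u_ℓ(x + t(z - x)) ≤ u_ℓ(x) + t max_i (F i z - F i x - ℓ⟪z - x, x - y⟫)` for `z ∈ S`, `0 ≤ t ≤ 1`.
At the midpoint `z` of `x` and `y` the maximum on the right is negative, by strict convexity and
`u_ℓ(x) ≥ (ℓ/2)‖x - y‖²`, so `x` is not stationary.
-/

open Filter Set Topology
open scoped RealInnerProductSpace

lemma strictConvexOn_midpoint_lt {E : Type*} [AddCommGroup E] [Module ℝ E] {s : Set E} {f : E → ℝ}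
    {x y : E} (hf : StrictConvexOn ℝ s f) (hx : x ∈ s) (hy : y ∈ s) (hxy : x ≠ y) :
    f (midpoint ℝ x y) < (f x + f y) / 2 := by
  have hlt := hf.2 hx hy hxy (half_pos one_pos) (half_pos one_pos) (add_halves 1)
  rw [← smul_add, one_div, ← invOf_eq_inv, ← midpoint_eq_smul_add, invOf_eq_inv, smul_eq_mul,
    smul_eq_mul] at hlt
  linarith

section StrongConcavity

variable {E : Type*} [NormedAddCommGroup E] [NormedSpace ℝ E] {s : Set E} {f : E → ℝ} {m : ℝ}

lemma uniformConcaveOn_ciInf {ι : Type*} [Finite ι] [Nonempty ι] {φ : ℝ → ℝ} {g : ι → E → ℝ}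
    (hg : ∀ i, UniformConcaveOn s φ (g i)) : UniformConcaveOn s φ fun x => ⨅ i, g i x := by
  refine ⟨(hg (Classical.arbitrary ι)).1, fun x hx y hy a b ha hb hab => le_ciInf fun i => ?_⟩
  have hxi : ⨅ j, g j x ≤ g i x := ciInf_le (finite_range _).bddBelow i
  have hyi : ⨅ j, g j y ≤ g i y := ciInf_le (finite_range _).bddBelow i
  refine le_trans ?_ ((hg i).2 hx hy ha hb hab)
  gcongr

lemma add_sq_norm_sub_le_of_strongConcaveOn {y p : E} (hf : StrongConcaveOn s m f) (hy : y ∈ s)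
    (hmax : IsMaxOn f s y) (hp : p ∈ s) : f p + m / 2 * ‖p - y‖ ^ 2 ≤ f y := by
  have growth_of_weight :
      ∀ t ∈ Ioo (0 : ℝ) 1, f p + (1 - t) * (m / 2 * ‖p - y‖ ^ 2) ≤ f y := by
    rintro t ⟨ht0, ht1⟩
    have hconc := hf.2 hp hy ht0.le (sub_nonneg.2 ht1.le) (by ring)
    have hle : f (t • p + (1 - t) • y) ≤ f y :=
      hmax (hf.1 hp hy ht0.le (sub_nonneg.2 ht1.le) (by ring))
    simp only [smul_eq_mul] at hconc
    refine le_of_mul_le_mul_left ?_ ht0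
    linarith
  have hlim : Tendsto (fun t : ℝ => f p + (1 - t) * (m / 2 * ‖p - y‖ ^ 2)) (𝓝[>] 0)
      (𝓝 (f p + (1 - 0) * (m / 2 * ‖p - y‖ ^ 2))) :=
    (Continuous.tendsto (by fun_prop) 0).mono_left nhdsWithin_le_nhds
  rw [sub_zero, one_mul] at hlim
  exact le_of_tendsto hlim (mem_of_superset (Ioo_mem_nhdsGT one_pos) growth_of_weight)

/-- The chord from `x₀` to `p` leaves the unit ball at a point where `f ≤ M`, while strong concavity
forces the value there above `f x₀` by an amount linear in `dist p x₀`. -/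
lemma lt_of_strongConcaveOn_of_dist_gt {x₀ p : E} {M : ℝ} (hm : 0 < m)
    (hf : StrongConcaveOn s m f) (hx₀ : x₀ ∈ s) (hp : p ∈ s)
    (hM : ∀ w ∈ s ∩ Metric.closedBall x₀ 1, f w ≤ M)
    (hdist : 1 + 2 * (M - f x₀) / m < dist p x₀) : f p < f x₀ := by
  rw [dist_eq_norm] at hdist
  set r := ‖p - x₀‖
  have hr1 : 1 ≤ r := by
    have hMx₀ : 0 ≤ M - f x₀ := sub_nonneg.2 (hM x₀ ⟨hx₀, Metric.mem_closedBall_self zero_le_one⟩)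
    exact (le_add_of_nonneg_right (by positivity)).trans hdist.le
  have hr0 : 0 < r := one_pos.trans_le hr1
  have hrinv0 : 0 ≤ r⁻¹ := inv_nonneg.2 hr0.le
  have hrinv1 : 0 ≤ 1 - r⁻¹ := sub_nonneg.2 (inv_le_one_of_one_le₀ hr1)
  have hw_ball : r⁻¹ • p + (1 - r⁻¹) • x₀ ∈ Metric.closedBall x₀ 1 := by
    have hsub : r⁻¹ • p + (1 - r⁻¹) • x₀ - x₀ = r⁻¹ • (p - x₀) := by module
    rw [mem_closedBall_iff_norm, hsub, norm_smul, Real.norm_of_nonneg hrinv0,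
      inv_mul_cancel₀ hr0.ne']
  have hw := hM _ ⟨hf.1 hp hx₀ hrinv0 hrinv1 (by ring), hw_ball⟩
  have hconc : r⁻¹ * f p + (1 - r⁻¹) * f x₀ + r⁻¹ * (1 - r⁻¹) * (m / 2 * r ^ 2) ≤ M :=
    (hf.2 hp hx₀ hrinv0 hrinv1 (by ring)).trans hw
  have hchord : r⁻¹ * (f p - f x₀) ≤ M - f x₀ - (r - 1) * (m / 2) := by
    have hgain : r⁻¹ * (1 - r⁻¹) * (m / 2 * r ^ 2) = (r - 1) * (m / 2) := by field_simp
    linarith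
  have hlinear : M - f x₀ < (r - 1) * (m / 2) := by
    have := (div_lt_iff₀ hm).1 (lt_sub_iff_add_lt'.2 hdist)
    linarith
  have : r⁻¹ * (f p - f x₀) < 0 := by linarith
  exact sub_neg.1 (neg_of_mul_neg_right this hrinv0)

lemma exists_isMaxOn_of_strongConcaveOn [ProperSpace E] (hs : IsClosed s) (hne : s.Nonempty)
    (hm : 0 < m) (hf : StrongConcaveOn s m f) (hcont : ContinuousOn f s) :
    ∃ y ∈ s, IsMaxOn f s y := by
  obtain ⟨x₀, hx₀⟩ := hne
  obtain ⟨w, -, hw⟩ := ((isCompact_closedBall x₀ 1).inter_left hs).exists_isMaxOn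
    ⟨x₀, hx₀, Metric.mem_closedBall_self zero_le_one⟩ (hcont.mono inter_subset_left)
  refine hcont.exists_isMaxOn' hs hx₀ (eventually_inf_principal.2 ?_)
  filter_upwards [(tendsto_dist_right_cocompact_atTop x₀).eventually_gt_atTop
    (1 + 2 * (f w - f x₀) / m)] with p hdist hp
  exact (lt_of_strongConcaveOn_of_dist_gt hm hf hx₀ hp hw hdist).le

end StrongConcavity

section RegularizedMerit

variable {E ι : Type*} [NormedAddCommGroup E]

/-- The maximand `min_i (F i x - F i y - (ℓ/2)‖x - y‖²)` in the definition of the merit function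
`u_ℓ`, for objectives indexed by an arbitrary type. It is meant for finite nonempty `ι`; over an
empty `ι` its value is `0`. -/
noncomputable def regularizedGap (ℓ : ℝ) (F : ι → E → ℝ) (x y : E) : ℝ :=
  ⨅ i, (F i x - F i y - ℓ / 2 * ‖x - y‖ ^ 2)

/-- The merit function `u_ℓ` on a normed space, of which `meritU` is the case of `ℝⁿ`. As there, the
maximum over `S` is encoded by `sSup`, which is `0` if the values are unbounded. -/
noncomputable def regularizedMerit (ℓ : ℝ) (S : Set E) (F : ι → E → ℝ) (x : E) : ℝ :=
  sSup (regularizedGap ℓ F x '' S)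

variable {ℓ : ℝ} {S : Set E} {F : ι → E → ℝ} {x y z : E}

lemma regularizedMerit_eq_of_isMaxOn (hy : y ∈ S) (hmax : IsMaxOn (regularizedGap ℓ F x) S y) :
    regularizedMerit ℓ S F x = regularizedGap ℓ F x y :=
  IsGreatest.csSup_eq ⟨mem_image_of_mem _ hy, forall_mem_image.2 hmax⟩

lemma regularizedGap_self : regularizedGap ℓ F x x = 0 := by
  simp [regularizedGap]

variable [Finite ι]

lemma regularizedGap_le (i : ι) :
    regularizedGap ℓ F x y ≤ F i x - F i y - ℓ / 2 * ‖x - y‖ ^ 2 :=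
  ciInf_le (finite_range _).bddBelow i

variable [Nonempty ι]

lemma exists_eq_regularizedGap (ℓ : ℝ) (F : ι → E → ℝ) (x y : E) :
    ∃ i, F i x - F i y - ℓ / 2 * ‖x - y‖ ^ 2 = regularizedGap ℓ F x y :=
  exists_eq_ciInf_of_finite

lemma continuousOn_regularizedGap (hF : ∀ i, ContinuousOn (F i) S) :
    ContinuousOn (regularizedGap ℓ F x) S := by
  have := Fintype.ofFinite ι
  have hinf' : regularizedGap ℓ F x = fun p => Finset.univ.inf' Finset.univ_nonempty
      fun i => F i x - F i p - ℓ / 2 * ‖x - p‖ ^ 2 :=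
    funext fun p => (Finset.inf'_univ_eq_ciInf _).symm
  rw [hinf']
  exact ContinuousOn.finset_inf'_apply _ fun i _ =>
    (continuousOn_const.sub (hF i)).sub (by fun_prop)

variable [InnerProductSpace ℝ E]

lemma strongConcaveOn_regularizedGap (hF : ∀ i, ConvexOn ℝ S (F i)) :
    StrongConcaveOn S ℓ (regularizedGap ℓ F x) := by
  refine uniformConcaveOn_ciInf fun i => strongConcaveOn_iff_convex.2 ?_
  have hsplit : (fun p => F i x - F i p - ℓ / 2 * ‖x - p‖ ^ 2 + ℓ / 2 * ‖p‖ ^ 2) =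
      fun p => (ℓ • innerₛₗ ℝ x) p + (-F i p + (F i x - ℓ / 2 * ‖x‖ ^ 2)) := by
    funext p
    simp only [norm_sub_sq_real, LinearMap.smul_apply, innerₛₗ_apply_apply, smul_eq_mul]
    ring
  rw [hsplit]
  exact ((ℓ • innerₛₗ ℝ x).concaveOn (hF i).1).add ((hF i).neg.add_const _)

lemma sq_norm_sub_le_regularizedGap_of_isMaxOn (hF : ∀ i, ConvexOn ℝ S (F i)) (hx : x ∈ S)
    (hy : y ∈ S) (hmax : IsMaxOn (regularizedGap ℓ F x) S y) :
    ℓ / 2 * ‖x - y‖ ^ 2 ≤ regularizedGap ℓ F x y := by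
  simpa only [regularizedGap_self, zero_add] using
    add_sq_norm_sub_le_of_strongConcaveOn (strongConcaveOn_regularizedGap hF) hy hmax hx

lemma regularizedGap_add_smul_le {p : E} {c t : ℝ} (hℓ : 0 ≤ ℓ) (hF : ∀ i, ConvexOn ℝ S (F i))
    (hx : x ∈ S) (hy : y ∈ S) (hmax : IsMaxOn (regularizedGap ℓ F x) S y) (hz : z ∈ S)
    (hp : p ∈ S) (hc : ∀ i, F i z - F i x - ℓ * ⟪z - x, x - y⟫ ≤ c) (ht : t ∈ Icc (0 : ℝ) 1) :
    regularizedGap ℓ F (x + t • (z - x)) p ≤ regularizedGap ℓ F x y + t * c := by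
  obtain ⟨i, hi⟩ := exists_eq_regularizedGap ℓ F x p
  have hchord : F i (x + t • (z - x)) ≤ F i x + t * (F i z - F i x) := by
    have := (hF i).2 hx hz (sub_nonneg.2 ht.2) ht.1 (by ring)
    rw [show (1 - t) • x + t • z = x + t • (z - x) by module] at this
    simp only [smul_eq_mul] at this
    linarith
  have hgrowth :=
    add_sq_norm_sub_le_of_strongConcaveOn (strongConcaveOn_regularizedGap hF) hy hmax hp
  have hsq : ‖x + t • (z - x) - p‖ ^ 2 + ‖p - y‖ ^ 2 =
      ‖x - p‖ ^ 2 + 2 * t * ⟪z - x, x - y⟫ + ‖t • (z - x) + (y - p)‖ ^ 2 := by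
    rw [show x + t • (z - x) - p = (x - y) + (y - p) + t • (z - x) by abel,
      show x - p = (x - y) + (y - p) by abel, norm_sub_rev p y, add_comm (t • (z - x)),
      norm_add_sq_real _ (t • _), norm_add_sq_real _ (t • _), inner_add_left,
      inner_smul_right, inner_smul_right, real_inner_comm (x - y)]
    ring
  have hslope := mul_le_mul_of_nonneg_left (hc i) ht.1
  have hsquare : 0 ≤ ℓ / 2 * ‖t • (z - x) + (y - p)‖ ^ 2 := by positivity
  calc regularizedGap ℓ F (x + t • (z - x)) p
      ≤ F i (x + t • (z - x)) - F i p - ℓ / 2 * ‖x + t • (z - x) - p‖ ^ 2 := regularizedGap_le i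
    _ ≤ regularizedGap ℓ F x p + ℓ / 2 * ‖p - y‖ ^ 2
          + t * (F i z - F i x - ℓ * ⟪z - x, x - y⟫)
          - ℓ / 2 * ‖t • (z - x) + (y - p)‖ ^ 2 := by
        rw [← hi]
        linear_combination hchord - ℓ / 2 * hsq
    _ ≤ regularizedGap ℓ F x y + t * c := by linarith

lemma regularizedMerit_add_smul_le {c t : ℝ} (hℓ : 0 ≤ ℓ) (hF : ∀ i, ConvexOn ℝ S (F i))
    (hx : x ∈ S) (hy : y ∈ S) (hmax : IsMaxOn (regularizedGap ℓ F x) S y) (hz : z ∈ S)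
    (hc : ∀ i, F i z - F i x - ℓ * ⟪z - x, x - y⟫ ≤ c) (ht : t ∈ Icc (0 : ℝ) 1) :
    regularizedMerit ℓ S F (x + t • (z - x)) ≤ regularizedMerit ℓ S F x + t * c := by
  rw [regularizedMerit_eq_of_isMaxOn hy hmax]
  exact csSup_le (Set.Nonempty.image _ ⟨x, hx⟩) <| forall_mem_image.2 fun p hp =>
    regularizedGap_add_smul_le hℓ hF hx hy hmax hz hp hc ht

lemma exists_le_of_isMaxOn_regularizedGap_self {p : E} (hF : ∀ i, ConvexOn ℝ S (F i)) (hx : x ∈ S)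
    (hmax : IsMaxOn (regularizedGap ℓ F x) S x) (hp : p ∈ S) : ∃ i, F i x ≤ F i p := by
  obtain ⟨i, hi⟩ := exists_eq_regularizedGap ℓ F x p
  have hgrowth :=
    add_sq_norm_sub_le_of_strongConcaveOn (strongConcaveOn_regularizedGap hF) hx hmax hp
  rw [regularizedGap_self, norm_sub_rev] at hgrowth
  exact ⟨i, by linarith⟩

lemma exists_midpoint_slope_le_neg_of_isMaxOn (hF : ∀ i, StrictConvexOn ℝ S (F i)) (hx : x ∈ S)
    (hy : y ∈ S) (hmax : IsMaxOn (regularizedGap ℓ F x) S y) (hxy : x ≠ y) :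
    ∃ c < 0, ∀ i, F i (midpoint ℝ x y) - F i x - ℓ * ⟪midpoint ℝ x y - x, x - y⟫ ≤ c := by
  obtain ⟨i, hi⟩ := Finite.exists_max fun i =>
    F i (midpoint ℝ x y) - F i x - ℓ * ⟪midpoint ℝ x y - x, x - y⟫
  refine ⟨_, ?_, hi⟩
  have hmid := strictConvexOn_midpoint_lt (hF i) hx hy hxy
  have hgrowth := sq_norm_sub_le_regularizedGap_of_isMaxOn (fun i => (hF i).convexOn) hx hy hmax
  have hgap : regularizedGap ℓ F x y ≤ F i x - F i y - ℓ / 2 * ‖x - y‖ ^ 2 := regularizedGap_le i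
  have hinner : ⟪midpoint ℝ x y - x, x - y⟫ = -(1 / 2) * ‖x - y‖ ^ 2 := by
    rw [midpoint_sub_left, ← neg_sub x y, smul_neg, inner_neg_left, real_inner_smul_left,
      real_inner_self_eq_norm_sq, invOf_eq_inv]
    ring
  rw [hinner]
  linarith

end RegularizedMerit

theorem pareto_optimal_of_meritU_stationary_general {E ι : Type*} [NormedAddCommGroup E]
    [InnerProductSpace ℝ E] [ProperSpace E] [Finite ι] {S : Set E} (hS : IsClosed S)
    {F : ι → E → ℝ} (hFcont : ∀ i, ContinuousOn (F i) S) (hF : ∀ i, StrictConvexOn ℝ S (F i))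
    {ℓ : ℝ} (hℓ : 0 < ℓ) {x : E} (hx : x ∈ S)
    (hstat : ∀ z ∈ S, ∃ v, Tendsto
      (fun t : ℝ => (regularizedMerit ℓ S F (x + t • (z - x)) - regularizedMerit ℓ S F x) / t)
      (𝓝[>] 0) (𝓝 v) ∧ 0 ≤ v) :
    ¬ ∃ z ∈ S, (∀ i, F i z ≤ F i x) ∧ ∃ j, F j z < F j x := by
  rintro ⟨z, hz, hle, j, hlt⟩
  have : Nonempty ι := ⟨j⟩
  have hFconv i : ConvexOn ℝ S (F i) := (hF i).convexOn
  obtain ⟨y, hy, hmax⟩ := exists_isMaxOn_of_strongConcaveOn hS ⟨x, hx⟩ hℓ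
    (strongConcaveOn_regularizedGap hFconv) (continuousOn_regularizedGap (x := x) hFcont)
  have hxy : x ≠ y := by
    rintro rfl
    have hzx : z ≠ x := ne_of_apply_ne (F j) hlt.ne
    obtain ⟨i, hi⟩ := exists_le_of_isMaxOn_regularizedGap_self hFconv hx hmax
      ((hF j).1.midpoint_mem hz hx)
    linarith [strictConvexOn_midpoint_lt (hF i) hz hx hzx, hle i]
  obtain ⟨c, hc0, hc⟩ := exists_midpoint_slope_le_neg_of_isMaxOn hF hx hy hmax hxy
  have hmid : midpoint ℝ x y ∈ S := (hF j).1.midpoint_mem hx hy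
  obtain ⟨v, hv, hv0⟩ := hstat _ hmid
  have hvc : v ≤ c := by
    refine le_of_tendsto hv ?_
    filter_upwards [Ioo_mem_nhdsGT one_pos] with t ht
    rw [div_le_iff₀' ht.1, sub_le_iff_le_add']
    exact regularizedMerit_add_smul_le hℓ.le hFconv hx hy hmax hmid hc (Ioo_subset_Icc_self ht)
  exact (hc0.trans_le hv0).not_ge hvc

/-- if every `F i` is strictly convex and `x ∈ S` is a stationary point of
`min_{x ∈ S} u_ℓ(x)` (i.e. `u_ℓ′(x; z - x) ≥ 0` for all `z ∈ S`), then `x` is Pareto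
optimal for `min_{x ∈ S} F x`. -/
theorem pareto_optimal_of_meritU_stationary {n m : ℕ} (hm : 0 < m)
    (S : Set (EuclideanSpace ℝ (Fin n))) (hS : S.Nonempty)
    (hSclosed : IsClosed S) (hSconv : Convex ℝ S)
    (F : Fin m → EuclideanSpace ℝ (Fin n) → ℝ)
    (hFsconv : ∀ i, StrictConvexOn ℝ Set.univ (F i))
    (ℓ : ℝ) (hℓ : 0 < ℓ)
    (x : EuclideanSpace ℝ (Fin n)) (hx : x ∈ S)
    (hstat : ∀ z ∈ S, ∃ v, HasDirDeriv (meritU ℓ S F) x (z - x) v ∧ 0 ≤ v) :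
    ¬ ∃ z ∈ S, (∀ i, F i z ≤ F i x) ∧ ∃ j, F j z < F j x :=
  pareto_optimal_of_meritU_stationary_general hSclosed
    (fun i => ((hFsconv i).convexOn.continuousOn isOpen_univ).mono (subset_univ S))
    (fun i => (hFsconv i).subset (subset_univ S) hSconv) hℓ hx hstat
end

section
/- Let ℓ > 0 and suppose that for every i = 1,…,m at least one of the following holds: (a) f_i is μ_i-convex for some μ_i ∈ ℝ, F_i is σ_i-convex for some σ_i > 0, and ρ_i := σ_i + μ_i > 0; or (b) ∇f_i is L_i-Lipschitz continuous for some L_i > 0, F_i is σ_i-convex for some σ_i > 0, and ρ_i := σ_i − L_i > 0. Set ρ = min_{i=1,…,m} ρ_i and define κ(ρ) = (ρ − ℓ)/2 if ℓ < ρ/2 and κ(ρ) = ρ²/(8ℓ) otherwise. Then w_ℓ(x) ≥ κ(ρ) · inf_{x*∈X*} ‖x − x*‖² for every x ∈ S, where X* is the set of Pareto optimal points of min_{x∈S} F(x). -/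
open scoped RealInnerProductSpace

/-- `σ`-convexity: `h(αa + (1-α)b) ≤ αh(a) + (1-α)h(b) - (α(1-α)σ/2)‖a - b‖²`. -/
def SigmaConvex {n : ℕ} (σ : ℝ) (h : EuclideanSpace ℝ (Fin n) → ℝ) : Prop :=
  ∀ a b : EuclideanSpace ℝ (Fin n), ∀ α ∈ Set.Icc (0 : ℝ) 1,
    h (α • a + (1 - α) • b) ≤
      α * h a + (1 - α) * h b - α * (1 - α) * σ / 2 * ‖a - b‖ ^ 2

/-- The regularized and partially linearized merit function
`w_ℓ(x) = max_{y ∈ S} min_i (⟨∇f_i(x), x - y⟩ + g_i(x) - g_i(y) - (ℓ/2)‖x - y‖²)`. -/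
noncomputable def meritW {n m : ℕ} (ℓ : ℝ) (S : Set (EuclideanSpace ℝ (Fin n)))
    (Gf : Fin m → EuclideanSpace ℝ (Fin n) → EuclideanSpace ℝ (Fin n))
    (g : Fin m → EuclideanSpace ℝ (Fin n) → ℝ)
    (x : EuclideanSpace ℝ (Fin n)) : ℝ :=
  sSup ((fun y => ⨅ i, (⟪Gf i x, x - y⟫ + g i x - g i y - ℓ / 2 * ‖x - y‖ ^ 2)) '' S)

/-!
Minimax over the simplex of weights `p` provides one `p` for which the weighted gap
`∑ i, p i * (⟪∇f i x, x - y⟫ + g i x - g i y - ℓ / 2 * ‖x - y‖ ^ 2)` is at most `w_ℓ x` for every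
`y ∈ S`. The scalarization `∑ i, p i * F i` is strongly convex, so it has a unique minimizer `z` on
`S`, which is therefore Pareto optimal. Quadratic growth of the scalarization at `z` and the
first-order inequality for each `f i` at `x` bound the weighted gap at `y = z` from below by
`(ρ - ℓ) / 2 * ‖x - z‖ ^ 2`. The weighted gap is `ℓ`-strongly concave and vanishes at `y = x`, so at
`y = t • z + (1 - t) • x` it is at least `(t * ρ / 2 - ℓ * t ^ 2 / 2) * ‖x - z‖ ^ 2`; the best
`t ∈ [0, 1]` gives `κ(ρ)`. A gradient with Lipschitz constant `L` makes `f i` a `(-L)`-convex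
function, so (b) is an instance of (a).
-/

section StrongConvexity

open Filter Topology

variable {E ι : Type*} [NormedAddCommGroup E] [NormedSpace ℝ E] {S : Set E} {m : ℝ} {h : E → ℝ}

theorem strongConvexOn_sum_mul {t : Finset ι} {p c : ι → ℝ} {h : ι → E → ℝ} (hS : Convex ℝ S)
    (hp : ∀ i ∈ t, 0 ≤ p i) (hh : ∀ i ∈ t, StrongConvexOn S (c i) (h i)) :
    StrongConvexOn S (∑ i ∈ t, p i * c i) (fun y ↦ ∑ i ∈ t, p i * h i y) := by
  refine ⟨hS, fun y hy z hz a b ha hb hab ↦ ?_⟩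
  calc ∑ i ∈ t, p i * h i (a • y + b • z)
      ≤ ∑ i ∈ t, p i * (a • h i y + b • h i z - a * b * (c i / 2 * ‖y - z‖ ^ 2)) :=
        Finset.sum_le_sum fun i hi ↦
          mul_le_mul_of_nonneg_left ((hh i hi).2 hy hz ha hb hab) (hp i hi)
    _ = _ := by
        simp only [smul_eq_mul, Finset.mul_sum, Finset.sum_mul, Finset.sum_div,
          ← Finset.sum_add_distrib, ← Finset.sum_sub_distrib]
        exact Finset.sum_congr rfl fun i _ ↦ by ring

theorem strongConcaveOn_sum_mul {t : Finset ι} {p c : ι → ℝ} {h : ι → E → ℝ} (hS : Convex ℝ S)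
    (hp : ∀ i ∈ t, 0 ≤ p i) (hh : ∀ i ∈ t, StrongConcaveOn S (c i) (h i)) :
    StrongConcaveOn S (∑ i ∈ t, p i * c i) (fun y ↦ ∑ i ∈ t, p i * h i y) := by
  have hneg := (strongConvexOn_sum_mul hS hp fun i hi ↦ UniformConcaveOn.neg (hh i hi)).neg
  simpa [StrongConcaveOn, Pi.neg_def] using hneg

theorem add_norm_sq_le_of_strongConvexOn_of_mul_le {t d : ℝ} {x y : E}
    (hh : StrongConvexOn S m h) (hx : x ∈ S) (hy : y ∈ S) (ht₀ : 0 < t) (ht₁ : t ≤ 1)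
    (hle : t * d ≤ h (t • y + (1 - t) • x) - h x) :
    h x + d + (1 - t) * (m / 2 * ‖y - x‖ ^ 2) ≤ h y := by
  have hconv := hh.2 hy hx ht₀.le (sub_nonneg.2 ht₁) (add_sub_cancel t 1)
  simp only [smul_eq_mul] at hconv
  exact le_of_mul_le_mul_left (by linarith) ht₀

theorem add_norm_sq_le_of_strongConvexOn_of_tendsto {ψ : ℝ → ℝ} {d : ℝ} {x y : E}
    (hh : StrongConvexOn S m h) (hx : x ∈ S) (hy : y ∈ S) (hψ : Tendsto ψ (𝓝[>] 0) (𝓝 d))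
    (hle : ∀ᶠ t in 𝓝[>] (0 : ℝ), t * ψ t ≤ h (t • y + (1 - t) • x) - h x) :
    h x + d + m / 2 * ‖y - x‖ ^ 2 ≤ h y := by
  have hlim : Tendsto (fun t ↦ h x + ψ t + (1 - t) * (m / 2 * ‖y - x‖ ^ 2)) (𝓝[>] 0)
      (𝓝 (h x + d + (1 - 0) * (m / 2 * ‖y - x‖ ^ 2))) := by
    have hid : Tendsto (fun t : ℝ ↦ t) (𝓝[>] 0) (𝓝 0) := tendsto_id.mono_left nhdsWithin_le_nhds
    exact (hψ.const_add _).add ((hid.const_sub 1).mul_const _)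
  rw [sub_zero, one_mul] at hlim
  refine le_of_tendsto hlim ?_
  filter_upwards [hle, Ioo_mem_nhdsGT (zero_lt_one (α := ℝ))] with t hψt ⟨ht₀, ht₁⟩
  exact add_norm_sq_le_of_strongConvexOn_of_mul_le hh hx hy ht₀ ht₁.le hψt

theorem add_norm_sq_le_of_strongConvexOn_of_isMinOn {z y : E} (hh : StrongConvexOn S m h)
    (hz : z ∈ S) (hmin : IsMinOn h S z) (hy : y ∈ S) : h z + m / 2 * ‖y - z‖ ^ 2 ≤ h y := by
  suffices hle : ∀ᶠ t in 𝓝[>] (0 : ℝ), t * 0 ≤ h (t • y + (1 - t) • z) - h z by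
    simpa using add_norm_sq_le_of_strongConvexOn_of_tendsto hh hz hy tendsto_const_nhds hle
  filter_upwards [Ioo_mem_nhdsGT (zero_lt_one (α := ℝ))] with t ⟨ht₀, ht₁⟩
  rw [mul_zero, sub_nonneg]
  exact hmin (hh.1 hy hz ht₀.le (sub_nonneg.2 ht₁.le) (add_sub_cancel t 1))

theorem bddBelow_image_of_strongConvexOn (hm : 0 < m) (hh : StrongConvexOn S m h)
    (hlsc : LowerSemicontinuousOn h S) : BddBelow (h '' S) := by
  obtain rfl | ⟨x, hx⟩ := S.eq_empty_or_nonempty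
  · simp
  obtain ⟨δ, hδ, hnear⟩ := Metric.mem_nhdsWithin_iff.1 (hlsc x hx (h x - 1) (sub_one_lt _))
  refine ⟨h x - 1 - 4 / (δ ^ 2 * m), ?_⟩
  rintro _ ⟨y, hy, rfl⟩
  have hconst : 0 < 4 / (δ ^ 2 * m) := by positivity
  obtain hclose | hfar := lt_or_ge ‖y - x‖ δ
  · have hyx : h x - 1 < h y := hnear ⟨by rwa [Metric.mem_ball, dist_eq_norm], hy⟩
    linarith
  -- Compare `h y` with the value at the point of the segment `[x, y]` at distance `δ / 2` from `x`.
  set r := ‖y - x‖ with hr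
  have hr₀ : 0 < r := hδ.trans_le hfar
  set t := δ / (2 * r) with ht
  have ht₀ : 0 < t := by positivity
  have ht₁ : t ≤ 1 / 2 := by rw [ht, div_le_iff₀ (by positivity)]; linarith
  have hdist : dist (t • y + (1 - t) • x) x = δ / 2 := by
    rw [dist_eq_norm, show t • y + (1 - t) • x - x = t • (y - x) by module, norm_smul,
      Real.norm_of_nonneg ht₀.le, ← hr, ht]
    field_simp
  have hlower : h x - 1 < h (t • y + (1 - t) • x) :=
    hnear ⟨by rw [Metric.mem_ball, hdist]; linarith,
      hh.1 hy hx ht₀.le (by linarith) (add_sub_cancel t 1)⟩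
  calc h x - 1 - 4 / (δ ^ 2 * m)
      ≤ h x - 4 / (δ ^ 2 * m) + (m * δ * r - 4) ^ 2 / (4 * (δ ^ 2 * m)) := by
        have : 0 ≤ (m * δ * r - 4) ^ 2 / (4 * (δ ^ 2 * m)) := by positivity
        linarith
    _ = h x + -t⁻¹ + (1 - 1 / 2) * (m / 2 * r ^ 2) := by rw [ht]; field_simp; ring
    _ ≤ h x + -t⁻¹ + (1 - t) * (m / 2 * r ^ 2) := by gcongr
    _ ≤ h y := by
        refine add_norm_sq_le_of_strongConvexOn_of_mul_le hh hx hy ht₀ (by linarith) ?_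
        rw [mul_neg, mul_inv_cancel₀ ht₀.ne']
        linarith

theorem norm_sub_sq_le_of_strongConvexOn {c ε : ℝ} {a b : E} (hh : StrongConvexOn S m h)
    (hc : ∀ y ∈ S, c ≤ h y) (ha : a ∈ S) (hb : b ∈ S) (hac : h a ≤ c + ε) (hbc : h b ≤ c + ε) :
    m / 8 * ‖a - b‖ ^ 2 ≤ ε := by
  have hhalf : (0 : ℝ) ≤ 1 / 2 := by norm_num
  have hmid := hh.2 ha hb hhalf hhalf (add_halves 1)
  have hlower := hc _ (hh.1 ha hb hhalf hhalf (add_halves 1))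
  simp only [smul_eq_mul] at hmid
  linarith

theorem exists_isMinOn_of_strongConvexOn [CompleteSpace E] (hS : S.Nonempty) (hSc : IsClosed S)
    (hm : 0 < m) (hh : StrongConvexOn S m h) (hlsc : LowerSemicontinuousOn h S) :
    ∃ z ∈ S, IsMinOn h S z := by
  have hbdd := bddBelow_image_of_strongConvexOn hm hh hlsc
  set c := sInf (h '' S) with hcdef
  have hc : ∀ y ∈ S, c ≤ h y := fun y hy ↦ csInf_le hbdd ⟨y, hy, rfl⟩
  obtain ⟨v, hanti, hlim, hv⟩ := exists_seq_tendsto_sInf (hS.image h) hbdd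
  choose u huS huv using hv
  obtain rfl : h ∘ u = v := funext huv
  have hcauchy : CauchySeq u := by
    refine cauchySeq_of_le_tendsto_0 (fun N ↦ √(8 / m * (h (u N) - c))) (fun n k N hn hk ↦ ?_) ?_
    · have hnk := norm_sub_sq_le_of_strongConvexOn hh hc (huS n) (huS k) (ε := h (u N) - c)
        (by linarith [show h (u n) ≤ h (u N) from hanti hn])
        (by linarith [show h (u k) ≤ h (u N) from hanti hk])
      rw [dist_eq_norm]
      refine Real.le_sqrt_of_sq_le ?_
      rw [div_mul_eq_mul_div, le_div_iff₀ hm]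
      linarith
    · rw [← hcdef] at hlim
      simpa using! ((hlim.sub_const c).const_mul (8 / m)).sqrt
  obtain ⟨z, hz, huz⟩ := cauchySeq_tendsto_of_isComplete hSc.isComplete huS hcauchy
  refine ⟨z, hz, fun y hy ↦ le_trans ?_ (hc y hy)⟩
  refine le_of_forall_lt fun b hb ↦ ?_
  obtain ⟨b', hbb', hb'⟩ := exists_between hb
  have huz' : Tendsto u atTop (𝓝[S] z) :=
    tendsto_nhdsWithin_iff.2 ⟨huz, Eventually.of_forall huS⟩
  have hlarge : ∀ᶠ n in atTop, b' ≤ (h ∘ u) n :=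
    (huz'.eventually (hlsc z hz b' hb')).mono fun _ hn ↦ hn.le
  exact hbb'.trans_le (ge_of_tendsto hlim hlarge)

end StrongConvexity

section Gradient

open Filter Topology

variable {E : Type*} [NormedAddCommGroup E] [InnerProductSpace ℝ E]
  {S : Set E} {m : ℝ} {f : E → ℝ} {G : E → E}

theorem monotoneOn_inner_comp_segment_sub {a b : E} (hS : Convex ℝ S)
    (hmono : ∀ a ∈ S, ∀ b ∈ S, m * ‖a - b‖ ^ 2 ≤ ⟪G a - G b, a - b⟫) (ha : a ∈ S) (hb : b ∈ S) :
    MonotoneOn (fun t : ℝ ↦ ⟪G (t • a + (1 - t) • b), a - b⟫ - m * ‖a - b‖ ^ 2 * t)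
      (Set.Icc 0 1) := by
  intro s hs t ht hst
  obtain rfl | hlt := hst.eq_or_lt
  · rfl
  have hmem : ∀ r ∈ Set.Icc (0 : ℝ) 1, r • a + (1 - r) • b ∈ S := fun r hr ↦
    hS ha hb hr.1 (sub_nonneg.2 hr.2) (add_sub_cancel r 1)
  have hst' := hmono _ (hmem t ht) _ (hmem s hs)
  rw [show t • a + (1 - t) • b - (s • a + (1 - s) • b) = (t - s) • (a - b) by module, norm_smul,
    mul_pow, Real.norm_eq_abs, sq_abs, real_inner_smul_right, inner_sub_left] at hst'
  have hincr : m * ‖a - b‖ ^ 2 * (t - s) ≤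
      ⟪G (t • a + (1 - t) • b), a - b⟫ - ⟪G (s • a + (1 - s) • b), a - b⟫ :=
    le_of_mul_le_mul_left (by linarith) (sub_pos.2 hlt)
  simp only
  linarith

variable [CompleteSpace E]

theorem hasDerivAt_comp_segment_of_hasGradientAt {a b v : E} {t : ℝ}
    (hf : HasGradientAt f v (t • a + (1 - t) • b)) :
    HasDerivAt (fun s : ℝ ↦ f (s • a + (1 - s) • b)) ⟪v, a - b⟫ t := by
  have hline : HasDerivAt (fun s : ℝ ↦ s • a + (1 - s) • b) (a - b) t := by
    simpa [sub_eq_add_neg] using! ((hasDerivAt_id t).smul_const a).add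
      (((hasDerivAt_id t).const_sub 1).smul_const b)
  simpa using! hf.hasFDerivAt.comp_hasDerivAt t hline

theorem add_inner_add_norm_sq_le_of_strongConvexOn {x y v : E} (hf : StrongConvexOn S m f)
    (hx : x ∈ S) (hy : y ∈ S) (hv : HasGradientAt f v x) :
    f x + ⟪v, y - x⟫ + m / 2 * ‖y - x‖ ^ 2 ≤ f y := by
  have hderiv : HasDerivAt (fun t : ℝ ↦ f (t • y + (1 - t) • x)) ⟪v, y - x⟫ 0 :=
    hasDerivAt_comp_segment_of_hasGradientAt (by simpa using hv)
  refine add_norm_sq_le_of_strongConvexOn_of_tendsto hf hx hy hderiv.tendsto_slope_zero_right ?_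
  filter_upwards [self_mem_nhdsWithin] with t (ht : 0 < t)
  simp [mul_inv_cancel_left₀ ht.ne']

theorem strongConvexOn_of_le_inner_gradient_sub (hS : Convex ℝ S)
    (hG : ∀ y ∈ S, HasGradientAt f (G y) y)
    (hmono : ∀ a ∈ S, ∀ b ∈ S, m * ‖a - b‖ ^ 2 ≤ ⟪G a - G b, a - b⟫) :
    StrongConvexOn S m f := by
  refine ⟨hS, fun a ha b hb α β hα hβ hαβ ↦ ?_⟩
  obtain rfl : β = 1 - α := eq_sub_of_add_eq' hαβ
  set φ : ℝ → ℝ := fun t ↦ f (t • a + (1 - t) • b) - m / 2 * ‖a - b‖ ^ 2 * t ^ 2 with hφ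
  have hderiv : ∀ t ∈ Set.Icc (0 : ℝ) 1,
      HasDerivAt φ (⟪G (t • a + (1 - t) • b), a - b⟫ - m * ‖a - b‖ ^ 2 * t) t := fun t ht ↦ by
    have hmem := hS ha hb ht.1 (sub_nonneg.2 ht.2) (add_sub_cancel t 1)
    refine ((hasDerivAt_comp_segment_of_hasGradientAt (hG _ hmem)).sub
      ((hasDerivAt_pow 2 t).const_mul (m / 2 * ‖a - b‖ ^ 2))).congr_deriv ?_
    push_cast
    ring
  have hφconv : ConvexOn ℝ (Set.Icc 0 1) φ := by
    refine MonotoneOn.convexOn_of_deriv (convex_Icc 0 1)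
      (fun t ht ↦ (hderiv t ht).continuousAt.continuousWithinAt)
      (fun t ht ↦ (hderiv t (interior_subset ht)).differentiableAt.differentiableWithinAt) ?_
    exact ((monotoneOn_inner_comp_segment_sub hS hmono ha hb).mono interior_subset).congr
      fun t ht ↦ (hderiv t (interior_subset ht)).deriv.symm
  have hφα := hφconv.2 (Set.right_mem_Icc.2 zero_le_one) (Set.left_mem_Icc.2 zero_le_one) hα hβ hαβ
  simp only [hφ, smul_eq_mul, mul_one, mul_zero, add_zero, one_smul, sub_self, zero_smul,
    sub_zero, zero_add] at hφα ⊢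
  linarith

theorem strongConvexOn_neg_of_norm_gradient_sub_le {L : ℝ} (hS : Convex ℝ S)
    (hG : ∀ y ∈ S, HasGradientAt f (G y) y)
    (hL : ∀ a ∈ S, ∀ b ∈ S, ‖G a - G b‖ ≤ L * ‖a - b‖) : StrongConvexOn S (-L) f := by
  refine strongConvexOn_of_le_inner_gradient_sub hS hG fun a ha b hb ↦ ?_
  calc -L * ‖a - b‖ ^ 2 = -(L * ‖a - b‖ * ‖a - b‖) := by ring
    _ ≤ -(‖G a - G b‖ * ‖a - b‖) :=
        neg_le_neg (mul_le_mul_of_nonneg_right (hL a ha b hb) (norm_nonneg _))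
    _ ≤ ⟪G a - G b, a - b⟫ := neg_le_of_abs_le (abs_real_inner_le_norm _ _)

end Gradient

section Minimax

variable {E ι : Type*} [AddCommGroup E] [Module ℝ E] {S : Set E}

theorem concaveOn_sum_mul {t : Finset ι} {p : ι → ℝ} {H : ι → E → ℝ} (hS : Convex ℝ S)
    (hp : ∀ i ∈ t, 0 ≤ p i) (hH : ∀ i ∈ t, ConcaveOn ℝ S (H i)) :
    ConcaveOn ℝ S fun y ↦ ∑ i ∈ t, p i * H i y := by
  refine ⟨hS, fun y hy z hz a b ha hb hab ↦ ?_⟩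
  calc a • ∑ i ∈ t, p i * H i y + b • ∑ i ∈ t, p i * H i z
      = ∑ i ∈ t, p i * (a • H i y + b • H i z) := by
        simp only [smul_eq_mul, Finset.mul_sum, ← Finset.sum_add_distrib]
        exact Finset.sum_congr rfl fun i _ ↦ by ring
    _ ≤ ∑ i ∈ t, p i * H i (a • y + b • z) :=
        Finset.sum_le_sum fun i hi ↦
          mul_le_mul_of_nonneg_left ((hH i hi).2 hy hz ha hb hab) (hp i hi)

variable [TopologicalSpace E] [IsTopologicalAddGroup E] [ContinuousSMul ℝ E]

theorem exists_forall_lt_of_forall_exists_lt {V : Type*} [AddCommGroup V] [Module ℝ V]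
    [TopologicalSpace V] [IsTopologicalAddGroup V] [ContinuousSMul ℝ V] {X : Set V}
    {Φ : V → E → ℝ} {w : ℝ} (hX : X.Nonempty) (hXc : IsCompact X) (hXconv : Convex ℝ X)
    (hS : Convex ℝ S) (hlsc : ∀ y ∈ S, LowerSemicontinuousOn (fun p ↦ Φ p y) X)
    (hconv : ∀ y ∈ S, QuasiconvexOn ℝ X fun p ↦ Φ p y)
    (husc : ∀ p ∈ X, UpperSemicontinuousOn (Φ p) S) (hconc : ∀ p ∈ X, QuasiconcaveOn ℝ S (Φ p))
    (hlt : ∀ p ∈ X, ∃ y ∈ S, w < Φ p y) : ∃ y ∈ S, ∀ p ∈ X, w < Φ p y := by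
  have hcover : X ∩ ⋂ y ∈ S, (fun p ↦ Φ p y) ⁻¹' Set.Iic w = ∅ := by
    refine Set.eq_empty_of_forall_notMem fun p ⟨hp, hle⟩ ↦ ?_
    obtain ⟨y, hy, hwy⟩ := hlt p hp
    exact hwy.not_ge (Set.mem_iInter₂.1 hle y hy)
  obtain ⟨t, ht⟩ :=
    (LowerSemicontinuousOn.inter_biInter_preimage_Iic_eq_empty_iff_exists_finset hXc hlsc).1 hcover
  exact Sion.exists_lt_iInf_of_lt_iInf_of_finite hX hXc hlsc hconv hS husc hconc hXconv
    (s := Subtype.val '' (t : Set S)) (Set.toFinite _) (Subtype.coe_image_subset S _)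
    fun p hp ↦ let ⟨y, hy, hwy⟩ := ht p hp; ⟨y, ⟨y, hy, rfl⟩, hwy⟩

theorem exists_mem_stdSimplex_forall_sum_mul_le [Fintype ι] [Nonempty ι] {H : ι → E → ℝ} {w : ℝ}
    (hS : Convex ℝ S) (hconc : ∀ i, ConcaveOn ℝ S (H i)) (hcont : ∀ i, ContinuousOn (H i) S)
    (hw : ∀ y ∈ S, ∃ i, H i y ≤ w) :
    ∃ p ∈ stdSimplex ℝ ι, ∀ y ∈ S, ∑ i, p i * H i y ≤ w := by
  classical
  by_contra! hlt
  have hlin : ∀ y, IsLinearMap ℝ fun p : ι → ℝ ↦ ∑ i, p i * H i y := fun y ↦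
    ⟨fun p q ↦ by simp [add_mul, Finset.sum_add_distrib],
      fun c p ↦ by simp [Finset.mul_sum, mul_assoc]⟩
  have hcont_weight : ∀ y, Continuous fun p : ι → ℝ ↦ ∑ i, p i * H i y := fun y ↦ by fun_prop
  have hcont_sum : ∀ p : ι → ℝ, ContinuousOn (fun y ↦ ∑ i, p i * H i y) S := fun p ↦ by fun_prop
  obtain ⟨y, hy, hwy⟩ := exists_forall_lt_of_forall_exists_lt
    ⟨_, single_mem_stdSimplex ℝ (Classical.arbitrary ι)⟩ (isCompact_stdSimplex ℝ ι)
    (convex_stdSimplex ℝ ι) hS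
    (fun y _ ↦ (hcont_weight y).continuousOn.lowerSemicontinuousOn)
    (fun y _ ↦ ((hlin y).mk'.convexOn (convex_stdSimplex ℝ ι)).quasiconvexOn)
    (fun p _ ↦ (hcont_sum p).upperSemicontinuousOn)
    (fun p hp ↦ (concaveOn_sum_mul hS (fun i _ ↦ hp.1 i) fun i _ ↦ hconc i).quasiconcaveOn) hlt
  obtain ⟨i, hi⟩ := hw y hy
  have hwi : w < H i y := by
    simpa [Pi.single_apply] using hwy _ (single_mem_stdSimplex ℝ i)
  exact hwi.not_ge hi

end Minimax

section ParetoOptimality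

variable {E ι : Type*}

/-- The Pareto optimal points of the multiobjective problem `min_{x ∈ S} F x`. -/
def paretoSet (S : Set E) (F : ι → E → ℝ) : Set E :=
  {x | x ∈ S ∧ ¬ ∃ z ∈ S, (∀ i, F i z ≤ F i x) ∧ ∃ j, F j z < F j x}

theorem mem_paretoSet_of_isMinOn_sum_mul [AddCommGroup E] [Module ℝ E] [Fintype ι] {S : Set E}
    {F : ι → E → ℝ} {p : ι → ℝ} {z : E} (hp : ∀ i, 0 ≤ p i)
    (hconv : StrictConvexOn ℝ S fun y ↦ ∑ i, p i * F i y) (hz : z ∈ S)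
    (hmin : IsMinOn (fun y ↦ ∑ i, p i * F i y) S z) : z ∈ paretoSet S F := by
  refine ⟨hz, ?_⟩
  rintro ⟨u, hu, hle, j, hlt⟩
  have hsum : ∑ i, p i * F i u ≤ ∑ i, p i * F i z :=
    Finset.sum_le_sum fun i _ ↦ mul_le_mul_of_nonneg_left (hle i) (hp i)
  have huz : u = z := hconv.eq_of_isMinOn (fun y hy ↦ hsum.trans (hmin hy)) hmin hu hz
  exact hlt.ne (huz ▸ rfl)

theorem exists_mem_paretoSet_add_norm_sq_le [NormedAddCommGroup E] [NormedSpace ℝ E]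
    [CompleteSpace E] [Fintype ι] {S : Set E} {F : ι → E → ℝ} {p σ : ι → ℝ} {x : E}
    (hS : IsClosed S) (hp : p ∈ stdSimplex ℝ ι) (hσ : ∀ i, 0 < σ i)
    (hF : ∀ i, StrongConvexOn S (σ i) (F i)) (hFc : ∀ i, ContinuousOn (F i) S) (hx : x ∈ S) :
    ∃ z ∈ paretoSet S F,
      ∑ i, p i * F i z + (∑ i, p i * σ i) / 2 * ‖x - z‖ ^ 2 ≤ ∑ i, p i * F i x := by
  obtain ⟨j, hj⟩ : ∃ j, 0 < p j := by
    by_contra! hnonpos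
    linarith [hp.2, Finset.sum_nonpos fun i (_ : i ∈ Finset.univ) ↦ hnonpos i]
  have hσp : 0 < ∑ i, p i * σ i :=
    Finset.sum_pos' (fun i _ ↦ mul_nonneg (hp.1 i) (hσ i).le)
      ⟨j, Finset.mem_univ j, mul_pos hj (hσ j)⟩
  have hconv : StrongConvexOn S (∑ i, p i * σ i) fun y ↦ ∑ i, p i * F i y :=
    strongConvexOn_sum_mul (hF j).1 (fun i _ ↦ hp.1 i) fun i _ ↦ hF i
  have hcont : ContinuousOn (fun y ↦ ∑ i, p i * F i y) S := by fun_prop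
  obtain ⟨z, hz, hmin⟩ :=
    exists_isMinOn_of_strongConvexOn ⟨x, hx⟩ hS hσp hconv hcont.lowerSemicontinuousOn
  exact ⟨z, mem_paretoSet_of_isMinOn_sum_mul hp.1 (hconv.strictConvexOn hσp) hz hmin,
    add_norm_sq_le_of_strongConvexOn_of_isMinOn hconv hz hmin hx⟩

end ParetoOptimality

/-- The constant `κ(ρ)` of the error bound with regularization parameter `ℓ`: the maximum of
`t * ρ / 2 - ℓ * t ^ 2 / 2` over `t ∈ [0, 1]`, attained at `t = min 1 (ρ / (2 * ℓ))`. -/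
noncomputable def errorBoundConst (ℓ ρ : ℝ) : ℝ :=
  if ℓ < ρ / 2 then (ρ - ℓ) / 2 else ρ ^ 2 / (8 * ℓ)

theorem errorBoundConst_nonneg {ℓ ρ : ℝ} (hℓ : 0 < ℓ) : 0 ≤ errorBoundConst ℓ ρ := by
  unfold errorBoundConst
  split_ifs with h
  · linarith
  · positivity

theorem exists_mem_Icc_eq_errorBoundConst {ℓ ρ : ℝ} (hℓ : 0 < ℓ) (hρ : 0 ≤ ρ) :
    ∃ t ∈ Set.Icc (0 : ℝ) 1, t * ρ / 2 - ℓ * t ^ 2 / 2 = errorBoundConst ℓ ρ := by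
  unfold errorBoundConst
  split_ifs with h
  · exact ⟨1, by simp, by ring⟩
  · refine ⟨ρ / (2 * ℓ), ⟨by positivity, ?_⟩, by field_simp; ring⟩
    rw [div_le_one (by positivity)]
    linarith

theorem errorBoundConst_mul_norm_sq_le {E : Type*} [NormedAddCommGroup E] [NormedSpace ℝ E]
    {S : Set E} {Ψ : E → ℝ} {ℓ ρ w : ℝ} {x z : E} (hℓ : 0 < ℓ) (hρ : 0 ≤ ρ)
    (hΨ : StrongConcaveOn S ℓ Ψ) (hx : x ∈ S) (hz : z ∈ S) (hΨx : 0 ≤ Ψ x)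
    (hΨz : (ρ - ℓ) / 2 * ‖x - z‖ ^ 2 ≤ Ψ z) (hw : ∀ y ∈ S, Ψ y ≤ w) :
    errorBoundConst ℓ ρ * ‖x - z‖ ^ 2 ≤ w := by
  obtain ⟨t, ⟨ht₀, ht₁⟩, ht⟩ := exists_mem_Icc_eq_errorBoundConst hℓ hρ
  have ht₁' : 0 ≤ 1 - t := sub_nonneg.2 ht₁
  calc errorBoundConst ℓ ρ * ‖x - z‖ ^ 2
      = t * ((ρ - ℓ) / 2 * ‖x - z‖ ^ 2) + (1 - t) * 0
          + t * (1 - t) * (ℓ / 2 * ‖x - z‖ ^ 2) := by rw [← ht]; ring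
    _ ≤ t * Ψ z + (1 - t) * Ψ x + t * (1 - t) * (ℓ / 2 * ‖x - z‖ ^ 2) := by gcongr
    _ ≤ Ψ (t • z + (1 - t) • x) := by
        rw [norm_sub_rev x z]
        exact hΨ.2 hz hx ht₀ ht₁' (add_sub_cancel t 1)
    _ ≤ w := hw _ (hΨ.1 hz hx ht₀ ht₁' (add_sub_cancel t 1))

theorem iInf_le_sum_mul_of_mem_stdSimplex {ι : Type*} [Fintype ι] {p : ι → ℝ}
    (hp : p ∈ stdSimplex ℝ ι) (r : ι → ℝ) : ⨅ i, r i ≤ ∑ i, p i * r i :=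
  calc ⨅ i, r i = ∑ i, p i * ⨅ j, r j := by rw [← Finset.sum_mul, hp.2, one_mul]
    _ ≤ ∑ i, p i * r i := Finset.sum_le_sum fun i _ ↦
        mul_le_mul_of_nonneg_left (ciInf_le (Set.finite_range r).bddBelow i) (hp.1 i)

section Merit

variable {E ι : Type*} [NormedAddCommGroup E] [InnerProductSpace ℝ E] {S : Set E} {ℓ : ℝ}

/-- The regularized, partially linearized decrease of an objective `f + g` from `x` to `y`, where
`v` stands for `∇f x`. -/
noncomputable def linearizedGap (ℓ : ℝ) (v : E) (g : E → ℝ) (x y : E) : ℝ :=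
  ⟪v, x - y⟫ + g x - g y - ℓ / 2 * ‖x - y‖ ^ 2

/-- The merit function `w_ℓ` on an arbitrary real inner product space, for an arbitrary family of
objectives; `Gf i` stands for the gradient of the smooth part of the `i`-th one. -/
noncomputable def linearizedMerit (ℓ : ℝ) (S : Set E) (Gf : ι → E → E) (g : ι → E → ℝ) (x : E) :
    ℝ :=
  sSup ((fun y ↦ ⨅ i, linearizedGap ℓ (Gf i x) (g i) x y) '' S)

theorem linearizedGap_self (ℓ : ℝ) (v : E) (g : E → ℝ) (x : E) : linearizedGap ℓ v g x x = 0 := by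
  simp [linearizedGap]

theorem continuousOn_linearizedGap {g : E → ℝ} (hg : ContinuousOn g S) (ℓ : ℝ) (v x : E) :
    ContinuousOn (linearizedGap ℓ v g x) S := by
  unfold linearizedGap
  fun_prop

theorem strongConcaveOn_linearizedGap {g : E → ℝ} (hg : ConvexOn ℝ S g) (ℓ : ℝ) (v x : E) :
    StrongConcaveOn S ℓ (linearizedGap ℓ v g x) := by
  rw [strongConcaveOn_iff_convex]
  have haffine : ConcaveOn ℝ S fun y ↦
      ⟪ℓ • x - v, y⟫ + (⟪v, x⟫ + g x - ℓ / 2 * ‖x‖ ^ 2) :=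
    ((innerₛₗ ℝ (ℓ • x - v)).concaveOn hg.1).add_const _
  refine (haffine.sub hg).congr fun y _ ↦ ?_
  simp only [linearizedGap, Pi.sub_apply, norm_sub_sq_real, inner_sub_left, inner_sub_right,
    real_inner_smul_left]
  ring

theorem bddAbove_image_linearizedGap {g : E → ℝ} (hℓ : 0 < ℓ) (hg : ConvexOn ℝ S g)
    (hgc : ContinuousOn g S) (v x : E) : BddAbove (linearizedGap ℓ v g x '' S) := by
  obtain ⟨B, hB⟩ := bddBelow_image_of_strongConvexOn hℓ
    (strongConcaveOn_linearizedGap hg ℓ v x).neg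
    (continuousOn_linearizedGap hgc ℓ v x).neg.lowerSemicontinuousOn
  exact ⟨-B, Set.forall_mem_image.2 fun y hy ↦ le_neg_of_le_neg (hB ⟨y, hy, rfl⟩)⟩

theorem norm_sq_le_sum_mul_linearizedGap [Fintype ι] {p σ μ : ι → ℝ} {f g : ι → E → ℝ} {v : ι → E}
    {x z : E} (hp : p ∈ stdSimplex ℝ ι)
    (hf : ∀ i, f i x + ⟪v i, z - x⟫ + μ i / 2 * ‖z - x‖ ^ 2 ≤ f i z)
    (hF : ∑ i, p i * (f i z + g i z) + (∑ i, p i * σ i) / 2 * ‖x - z‖ ^ 2 ≤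
      ∑ i, p i * (f i x + g i x)) (ℓ : ℝ) :
    ((⨅ i, (σ i + μ i)) - ℓ) / 2 * ‖x - z‖ ^ 2 ≤ ∑ i, p i * linearizedGap ℓ (v i) (g i) x z := by
  have hρ : ⨅ i, (σ i + μ i) ≤ ∑ i, p i * (σ i + μ i) :=
    iInf_le_sum_mul_of_mem_stdSimplex hp _
  calc ((⨅ i, (σ i + μ i)) - ℓ) / 2 * ‖x - z‖ ^ 2
      ≤ (∑ i, p i * (σ i + μ i) - (∑ i, p i) * ℓ) / 2 * ‖x - z‖ ^ 2 := by
        rw [hp.2, one_mul]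
        gcongr
    _ = (∑ i, p i * σ i) / 2 * ‖x - z‖ ^ 2 + (∑ i, p i * (μ i - ℓ)) / 2 * ‖x - z‖ ^ 2 := by
        simp only [mul_add, mul_sub, Finset.sum_add_distrib, Finset.sum_sub_distrib, Finset.sum_mul]
        ring
    _ ≤ (∑ i, p i * (f i x + g i x) - ∑ i, p i * (f i z + g i z)) +
          (∑ i, p i * (μ i - ℓ)) / 2 * ‖x - z‖ ^ 2 := by gcongr; linarith
    _ = ∑ i, p i * (f i x + g i x - (f i z + g i z) + (μ i - ℓ) / 2 * ‖x - z‖ ^ 2) := by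
        simp only [Finset.sum_mul, Finset.sum_div, ← Finset.sum_sub_distrib,
          ← Finset.sum_add_distrib]
        exact Finset.sum_congr rfl fun i _ ↦ by ring
    _ ≤ ∑ i, p i * linearizedGap ℓ (v i) (g i) x z := by
        refine Finset.sum_le_sum fun i _ ↦ mul_le_mul_of_nonneg_left ?_ (hp.1 i)
        have hfi := hf i
        rw [norm_sub_rev, ← neg_sub x z, inner_neg_right] at hfi
        unfold linearizedGap
        linarith

variable [Finite ι] [Nonempty ι] {Gf : ι → E → E} {g : ι → E → ℝ}

theorem exists_linearizedGap_le_linearizedMerit (hℓ : 0 < ℓ) (hg : ∀ i, ConvexOn ℝ S (g i))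
    (hgc : ∀ i, ContinuousOn (g i) S) (x : E) {y : E} (hy : y ∈ S) :
    ∃ i, linearizedGap ℓ (Gf i x) (g i) x y ≤ linearizedMerit ℓ S Gf g x := by
  have hle_iInf : ∀ i y, ⨅ j, linearizedGap ℓ (Gf j x) (g j) x y ≤
      linearizedGap ℓ (Gf i x) (g i) x y := fun i y ↦ ciInf_le (Set.finite_range _).bddBelow i
  have hbdd : BddAbove ((fun y ↦ ⨅ i, linearizedGap ℓ (Gf i x) (g i) x y) '' S) := by
    let i : ι := Classical.arbitrary ι
    obtain ⟨B, hB⟩ := bddAbove_image_linearizedGap hℓ (hg i) (hgc i) (Gf i x) x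
    exact ⟨B, Set.forall_mem_image.2 fun y hy ↦ (hle_iInf i y).trans (hB ⟨y, hy, rfl⟩)⟩
  obtain ⟨i, hi⟩ := exists_eq_ciInf_of_finite (f := fun i ↦ linearizedGap ℓ (Gf i x) (g i) x y)
  exact ⟨i, hi.le.trans (le_csSup hbdd ⟨y, hy, rfl⟩)⟩

end Merit

theorem meritW_error_bound_general {E ι : Type*} [NormedAddCommGroup E] [InnerProductSpace ℝ E]
    [CompleteSpace E] [Finite ι] [Nonempty ι] {S : Set E} (hS : IsClosed S) {f g : ι → E → ℝ}
    {Gf : ι → E → E} (hGf : ∀ i, ∀ y ∈ S, HasGradientAt (f i) (Gf i y) y)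
    (hg : ∀ i, ConvexOn ℝ S (g i)) (hgc : ∀ i, ContinuousOn (g i) S) {ℓ : ℝ} (hℓ : 0 < ℓ)
    {σ μ : ι → ℝ} (hσ : ∀ i, 0 < σ i) (hρ : ∀ i, 0 ≤ σ i + μ i)
    (hf : ∀ i, StrongConvexOn S (μ i) (f i))
    (hF : ∀ i, StrongConvexOn S (σ i) fun y ↦ f i y + g i y) {x : E} (hx : x ∈ S) :
    errorBoundConst ℓ (⨅ i, (σ i + μ i)) *
        sInf ((fun z ↦ ‖x - z‖ ^ 2) '' paretoSet S fun i y ↦ f i y + g i y) ≤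
      linearizedMerit ℓ S Gf g x := by
  cases nonempty_fintype ι
  have hSconv : Convex ℝ S := (hF (Classical.arbitrary ι)).1
  obtain ⟨p, hp, hgap⟩ := exists_mem_stdSimplex_forall_sum_mul_le hSconv
    (fun i ↦ (strongConcaveOn_linearizedGap (hg i) ℓ (Gf i x) x).concaveOn fun r ↦ by positivity)
    (fun i ↦ continuousOn_linearizedGap (hgc i) ℓ (Gf i x) x)
    fun y hy ↦ exists_linearizedGap_le_linearizedMerit hℓ hg hgc x hy
  have hfc : ∀ i, ContinuousOn (f i) S := fun i y hy ↦
    (hGf i y hy).hasFDerivAt.continuousAt.continuousWithinAt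
  obtain ⟨z, hzP, hzgrowth⟩ := exists_mem_paretoSet_add_norm_sq_le hS hp hσ hF
    (fun i ↦ (hfc i).add (hgc i)) hx
  have hconc : StrongConcaveOn S ℓ fun y ↦ ∑ i, p i * linearizedGap ℓ (Gf i x) (g i) x y := by
    have hsum := strongConcaveOn_sum_mul hSconv (fun i (_ : i ∈ Finset.univ) ↦ hp.1 i)
      fun i _ ↦ strongConcaveOn_linearizedGap (hg i) ℓ (Gf i x) x
    rwa [← Finset.sum_mul, hp.2, one_mul] at hsum
  have hgap_z := norm_sq_le_sum_mul_linearizedGap hp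
    (fun i ↦ add_inner_add_norm_sq_le_of_strongConvexOn (hf i) hx hzP.1 (hGf i x hx)) hzgrowth ℓ
  have hinf : sInf ((fun z ↦ ‖x - z‖ ^ 2) '' paretoSet S fun i y ↦ f i y + g i y) ≤
      ‖x - z‖ ^ 2 :=
    csInf_le ⟨0, Set.forall_mem_image.2 fun _ _ ↦ sq_nonneg _⟩ ⟨z, hzP, rfl⟩
  refine (mul_le_mul_of_nonneg_left hinf (errorBoundConst_nonneg hℓ)).trans ?_
  exact errorBoundConst_mul_norm_sq_le hℓ (Real.iInf_nonneg hρ) hconc hx hzP.1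
    (by simp [linearizedGap_self]) hgap_z hgap

theorem SigmaConvex.strongConvexOn {n : ℕ} {σ : ℝ} {h : EuclideanSpace ℝ (Fin n) → ℝ}
    {S : Set (EuclideanSpace ℝ (Fin n))} (hh : SigmaConvex σ h) (hS : Convex ℝ S) :
    StrongConvexOn S σ h := by
  refine ⟨hS, fun a _ b _ α β hα hβ hαβ ↦ ?_⟩
  obtain rfl : β = 1 - α := eq_sub_of_add_eq' hαβ
  refine (hh a b α ⟨hα, sub_nonneg.1 hβ⟩).trans_eq ?_
  simp only [smul_eq_mul]
  ring

/-- under strong-convexity-type assumptions, `w_ℓ` provides a global error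
bound: `w_ℓ(x) ≥ κ(ρ) inf_{x* ∈ X*} ‖x - x*‖²` for all `x ∈ S`, where `X*` is the Pareto
optimal set, `ρ = min_i ρ_i`, and `κ(ρ) = (ρ - ℓ)/2` if `ℓ < ρ/2`, `κ(ρ) = ρ²/(8ℓ)`
otherwise. -/
theorem meritW_error_bound {n m : ℕ} (hm : 0 < m)
    (S : Set (EuclideanSpace ℝ (Fin n))) (hS : S.Nonempty)
    (hSclosed : IsClosed S) (hSconv : Convex ℝ S)
    (f g : Fin m → EuclideanSpace ℝ (Fin n) → ℝ)
    (Gf : Fin m → EuclideanSpace ℝ (Fin n) → EuclideanSpace ℝ (Fin n))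
    (hGf : ∀ i y, HasGradientAt (f i) (Gf i y) y)
    (hGfc : ∀ i, Continuous (Gf i))
    (hgconv : ∀ i, ConvexOn ℝ Set.univ (g i))
    (ℓ : ℝ) (hℓ : 0 < ℓ)
    (σ ρ : Fin m → ℝ) (hσ : ∀ i, 0 < σ i)
    (hcases : ∀ i,
      (∃ μ : ℝ, SigmaConvex μ (f i) ∧
        SigmaConvex (σ i) (fun y => f i y + g i y) ∧ ρ i = σ i + μ ∧ 0 < ρ i) ∨
      (∃ L : ℝ, 0 < L ∧
        (∀ a b : EuclideanSpace ℝ (Fin n), ‖Gf i a - Gf i b‖ ≤ L * ‖a - b‖) ∧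
        SigmaConvex (σ i) (fun y => f i y + g i y) ∧ ρ i = σ i - L ∧ 0 < ρ i)) :
    ∀ x ∈ S,
      (if ℓ < (⨅ i, ρ i) / 2 then ((⨅ i, ρ i) - ℓ) / 2
        else (⨅ i, ρ i) ^ 2 / (8 * ℓ)) *
        sInf ((fun xs => ‖x - xs‖ ^ 2) ''
          {xs | xs ∈ S ∧ ¬ ∃ z ∈ S, (∀ i, f i z + g i z ≤ f i xs + g i xs) ∧
            ∃ j, f j z + g j z < f j xs + g j xs}) ≤
      meritW ℓ S Gf g x := by
  intro x hx
  have : Nonempty (Fin m) := ⟨⟨0, hm⟩⟩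
  have hstrong : ∀ i, ∃ μ, StrongConvexOn S μ (f i) ∧
      SigmaConvex (σ i) (fun y ↦ f i y + g i y) ∧ ρ i = σ i + μ ∧ 0 < ρ i := fun i ↦ by
    obtain ⟨μ, hf, hF⟩ | ⟨L, -, hL, hF⟩ := hcases i
    · exact ⟨μ, hf.strongConvexOn hSconv, hF⟩
    · exact ⟨-L, strongConvexOn_neg_of_norm_gradient_sub_le hSconv (fun y _ ↦ hGf i y)
        fun a _ b _ ↦ hL a b, hF⟩
  choose μ hf hF hρ hρpos using hstrong
  obtain rfl : ρ = fun i ↦ σ i + μ i := funext hρ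
  exact meritW_error_bound_general hSclosed (fun i y _ ↦ hGf i y)
    (fun i ↦ (hgconv i).subset (Set.subset_univ S) hSconv)
    (fun i ↦ ((hgconv i).continuousOn isOpen_univ).mono (Set.subset_univ S)) hℓ hσ
    (fun i ↦ (hρpos i).le) hf
    (fun i ↦ (hF i).strongConvexOn hSconv) hx
end
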